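/- Let n ≥ 3 and ℓ ≥ 1 be integers and put μ = 1/(2(n−1)ℓ). There exist real numbers X₀ > 0 and c > 0 (depending only on n and ℓ) such that for every real X > X₀ there exist at least c·X^μ pairwise non-isomorphic number fields of degree n over ℚ whose discriminant has absolute value at most X and whose class number is divisible by ℓ. -/

import Mathlib

/-- A finite-dimensional intermediate field of `ℂ/ℚ` is a number field. -/
noncomputable instance (F : IntermediateField ℚ ℂ) [FiniteDimensional ℚ F] :
    NumberField F := ⟨⟩

/-!
Let `f` be monic of degree `n`, with `ℓ`-th power values `u j ^ ℓ` at `n - 1` integers `a j` such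
that `f' (a j)` is coprime to `u j`. In the field `K` of a root `θ` every ideal `(θ - a j)` is
then an `ℓ`-th power. If `ℓ` did not divide the class number, suitable powers of the `θ - a j`
would be units times `p`-th powers for some prime `p ∣ ℓ`. When the `X ^ (n - 1)`-coefficient
vanishes and the `X ^ (n - 2)`-coefficient is positive, `K` is not totally real, so its unit rank
is less than `n - 1` and there is a nontrivial relation among the `θ - a j` modulo `p`-th powers
and roots of unity. Such a relation is excluded by primes of degree one, one for each `i`, at
which `θ - a i` is the only `θ - a j` that is not a `p`-th power.

Interpolation at `a j = α j ^ ℓ` gives such an `f` depending on a parameter `s`. The auxiliary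
primes are prescribed by congruences, which are solvable because diagonal equations have enough
points over large finite fields. If `s` is a bounded multiple of a prime `q`, exactly divisible by
`q`, then `f` is Eisenstein at `q`; hence `q` divides the discriminant of `K`, which is
`O(q ^ (2 (n - 1) ℓ - 1))`. A discriminant bounded by `X` has `O(log X)` prime factors, so
Chebyshev's lower bound for the number of primes `q` yields sufficiently many different
discriminants.
-/

section DiagonalEquations

open Finset

variable {F : Type*} [Field F] [Fintype F]

/-- The exponential sum `∑ r, ψ (t * r ^ k)` over a finite field, used to count solutions of
diagonal equations. -/
noncomputable def powerCharSum (ψ : AddChar F ℂ) (k : ℕ) (t : F) : ℂ :=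
  ∑ r : F, ψ (t * r ^ k)

theorem powerCharSum_zero (ψ : AddChar F ℂ) (k : ℕ) : powerCharSum ψ k 0 = Fintype.card F := by
  simp [powerCharSum]

theorem powerCharSum_mul_pow (ψ : AddChar F ℂ) (k : ℕ) (t : F) {c : F} (hc : c ≠ 0) :
    powerCharSum ψ k (t * c ^ k) = powerCharSum ψ k t :=
  Fintype.sum_equiv (Equiv.mulLeft₀ c hc) _ _ fun r => by simp [mul_pow, mul_assoc]

variable {ψ : AddChar F ℂ} {k : ℕ}

theorem card_filter_pow_eq_le [DecidableEq F] (hk : 0 < k) (c : F) : #{r : F | r ^ k = c} ≤ k := by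
  have hsub : ({r : F | r ^ k = c} : Finset F) ⊆ (Polynomial.nthRoots k c).toFinset := by
    intro r hr
    simpa [Polynomial.mem_nthRoots hk] using hr
  exact (card_le_card hsub).trans
    ((Multiset.toFinset_card_le _).trans (Polynomial.card_nthRoots k c))

theorem sum_norm_sq_powerCharSum [DecidableEq F] (hψ : ψ.IsPrimitive) (k : ℕ) :
    ∑ t : F, ‖powerCharSum ψ k t‖ ^ 2 =
      Fintype.card F * ∑ r : F, (#{s : F | s ^ k = r ^ k} : ℝ) := by
  have expand (t : F) : ((‖powerCharSum ψ k t‖ : ℂ)) ^ 2 =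
      ∑ r : F, ∑ s : F, ψ (t * (s ^ k - r ^ k)) := by
    rw [← Complex.conj_mul', powerCharSum, map_sum, sum_mul_sum]
    refine sum_congr rfl fun r _ => sum_congr rfl fun s _ => ?_
    rw [← AddChar.map_neg_eq_conj, ← AddChar.map_add_eq_mul]
    ring_nf
  have orthogonality : ((∑ t : F, ‖powerCharSum ψ k t‖ ^ 2 : ℝ) : ℂ) =
      Fintype.card F * ∑ r : F, (#{s : F | s ^ k = r ^ k} : ℂ) := by
    push_cast
    simp_rw [expand]
    rw [sum_comm, mul_sum]
    refine sum_congr rfl fun r _ => ?_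
    rw [sum_comm]
    simp_rw [AddChar.sum_mulShift _ hψ, sub_eq_zero]
    push_cast
    rw [← sum_filter, sum_const, nsmul_eq_mul, mul_comm]
  exact_mod_cast orthogonality

theorem sum_norm_sq_powerCharSum_le (hψ : ψ.IsPrimitive) (hk : 0 < k) :
    ∑ t : F, ‖powerCharSum ψ k t‖ ^ 2 ≤ k * (Fintype.card F : ℝ) ^ 2 := by
  classical
  calc ∑ t : F, ‖powerCharSum ψ k t‖ ^ 2
      = Fintype.card F * ∑ r : F, (#{s : F | s ^ k = r ^ k} : ℝ) := sum_norm_sq_powerCharSum hψ k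
    _ ≤ Fintype.card F * ∑ _r : F, (k : ℝ) := by
        gcongr with r
        exact card_filter_pow_eq_le hk _
    _ = k * (Fintype.card F : ℝ) ^ 2 := by
        rw [sum_const, card_univ, nsmul_eq_mul]
        ring

theorem sum_norm_sq_powerCharSum_mul_le (hψ : ψ.IsPrimitive) (hk : 0 < k) {c : F} (hc : c ≠ 0) :
    ∑ t : F, ‖powerCharSum ψ k (t * c)‖ ^ 2 ≤ k * (Fintype.card F : ℝ) ^ 2 := by
  classical
  refine le_of_eq_of_le ?_ (sum_norm_sq_powerCharSum_le hψ hk)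
  exact Fintype.sum_equiv (Equiv.mulRight₀ c hc) _ _ fun _ => rfl

theorem sum_comp_mul_pow_le (hk : 0 < k) {t : F} (ht : t ≠ 0) {g : F → ℝ} (hg : 0 ≤ g) :
    ∑ c : F, g (t * c ^ k) ≤ k * ∑ y : F, g y := by
  classical
  rw [← sum_fiberwise (s := univ) (g := fun c : F => t * c ^ k), mul_sum]
  refine sum_le_sum fun y _ => ?_
  have fiber_card : #{c : F | t * c ^ k = y} ≤ k := by
    refine (card_le_card fun c hc => ?_).trans (card_filter_pow_eq_le hk (y / t))
    simp only [mem_filter, mem_univ, true_and] at hc ⊢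
    rw [← hc, mul_div_cancel_left₀ _ ht]
  calc ∑ c : F with t * c ^ k = y, g (t * c ^ k)
      = ∑ c : F with t * c ^ k = y, g y :=
        sum_congr rfl fun c hc => by rw [(mem_filter.mp hc).2]
    _ = #{c : F | t * c ^ k = y} * g y := by rw [sum_const, nsmul_eq_mul]
    _ ≤ k * g y := by
        gcongr
        exact hg y

-- Averaging over the multiplicative orbit `t * c ^ k`, on which the sum is constant, replaces
-- Weil's bound: the second moment alone gives square-root cancellation.
theorem norm_sq_powerCharSum_le (hψ : ψ.IsPrimitive) (hk : 0 < k) {t : F} (ht : t ≠ 0) :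
    ‖powerCharSum ψ k t‖ ^ 2 ≤ 2 * (k : ℝ) ^ 2 * Fintype.card F := by
  classical
  have two_le_card : (2 : ℝ) ≤ Fintype.card F := by exact_mod_cast Fintype.one_lt_card (α := F)
  have orbit_sum : (Fintype.card F - 1) * ‖powerCharSum ψ k t‖ ^ 2 ≤
      k * (k * (Fintype.card F : ℝ) ^ 2) :=
    calc (Fintype.card F - 1) * ‖powerCharSum ψ k t‖ ^ 2
        = ∑ c ∈ univ.erase (0 : F), ‖powerCharSum ψ k (t * c ^ k)‖ ^ 2 := by
          rw [sum_congr rfl fun c hc => by rw [powerCharSum_mul_pow ψ k t (ne_of_mem_erase hc)],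
            sum_const, card_erase_of_mem (mem_univ _), card_univ, nsmul_eq_mul,
            Nat.cast_pred Fintype.card_pos]
      _ ≤ ∑ c : F, ‖powerCharSum ψ k (t * c ^ k)‖ ^ 2 :=
          sum_le_sum_of_subset_of_nonneg (erase_subset _ _) fun _ _ _ => by positivity
      _ ≤ k * ∑ y : F, ‖powerCharSum ψ k y‖ ^ 2 :=
          sum_comp_mul_pow_le hk ht (g := fun y => ‖powerCharSum ψ k y‖ ^ 2)
            fun _ => by positivity
      _ ≤ k * (k * (Fintype.card F : ℝ) ^ 2) := by
          gcongr
          exact sum_norm_sq_powerCharSum_le hψ hk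
  refine le_of_mul_le_mul_left (a := (Fintype.card F : ℝ)) ?_ (by linarith)
  nlinarith [sq_nonneg ‖powerCharSum ψ k t‖]

theorem norm_powerCharSum_le (hψ : ψ.IsPrimitive) (hk : 0 < k) {t : F} (ht : t ≠ 0) :
    ‖powerCharSum ψ k t‖ ≤ 2 * k * √(Fintype.card F) := by
  refine le_of_sq_le_sq ((norm_sq_powerCharSum_le hψ hk ht).trans ?_) (by positivity)
  rw [mul_pow, Real.sq_sqrt (by positivity)]
  nlinarith [show (0 : ℝ) ≤ (k : ℝ) ^ 2 * Fintype.card F by positivity]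

theorem card_mul_card_diagonal_zeros [DecidableEq F] (hψ : ψ.IsPrimitive) (k : ℕ) (c₁ c₂ c₃ : F) :
    (Fintype.card F : ℂ) *
        #{x : F × F × F | c₁ * x.1 ^ k + c₂ * x.2.1 ^ k + c₃ * x.2.2 ^ k = 0} =
      ∑ t : F, powerCharSum ψ k (t * c₁) * (powerCharSum ψ k (t * c₂) *
        powerCharSum ψ k (t * c₃)) := by
  have expand (t : F) :
      powerCharSum ψ k (t * c₁) * (powerCharSum ψ k (t * c₂) * powerCharSum ψ k (t * c₃)) =
        ∑ x : F × F × F, ψ (t * (c₁ * x.1 ^ k + c₂ * x.2.1 ^ k + c₃ * x.2.2 ^ k)) := by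
    simp only [powerCharSum, Fintype.sum_prod_type, sum_mul_sum, ← AddChar.map_add_eq_mul]
    refine sum_congr rfl fun r _ => sum_congr rfl fun s _ => ?_
    rw [mul_sum]
    refine sum_congr rfl fun w _ => ?_
    rw [← AddChar.map_add_eq_mul]
    ring_nf
  simp_rw [expand]
  rw [sum_comm]
  simp_rw [AddChar.sum_mulShift _ hψ]
  push_cast
  rw [← sum_filter, sum_const, nsmul_eq_mul, mul_comm]

theorem norm_sum_erase_powerCharSum_mul_le [DecidableEq F] (hψ : ψ.IsPrimitive) (hk : 0 < k)
    {c₁ c₂ c₃ : F} (h₁ : c₁ ≠ 0) (h₂ : c₂ ≠ 0) (h₃ : c₃ ≠ 0) :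
    ‖∑ t ∈ univ.erase (0 : F), powerCharSum ψ k (t * c₁) * (powerCharSum ψ k (t * c₂) *
        powerCharSum ψ k (t * c₃))‖ ≤
      2 * k * √(Fintype.card F) * (k * (Fintype.card F : ℝ) ^ 2) := by
  have term_le {t : F} (ht : t ≠ 0) :
      ‖powerCharSum ψ k (t * c₁) * (powerCharSum ψ k (t * c₂) * powerCharSum ψ k (t * c₃))‖ ≤
        2 * k * √(Fintype.card F) *
          ((‖powerCharSum ψ k (t * c₂)‖ ^ 2 + ‖powerCharSum ψ k (t * c₃)‖ ^ 2) / 2) := by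
    rw [norm_mul, norm_mul]
    gcongr
    · exact norm_powerCharSum_le hψ hk (mul_ne_zero ht h₁)
    · linarith [two_mul_le_add_sq ‖powerCharSum ψ k (t * c₂)‖ ‖powerCharSum ψ k (t * c₃)‖]
  refine (norm_sum_le _ _).trans
    ((sum_le_sum fun t ht => term_le (ne_of_mem_erase ht)).trans ?_)
  rw [← mul_sum]
  gcongr
  calc _ ≤ ∑ t : F, (‖powerCharSum ψ k (t * c₂)‖ ^ 2 + ‖powerCharSum ψ k (t * c₃)‖ ^ 2) / 2 :=
        sum_le_sum_of_subset_of_nonneg (erase_subset _ _) fun _ _ _ => by positivity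
    _ ≤ k * (Fintype.card F : ℝ) ^ 2 := by
        rw [← sum_div, sum_add_distrib]
        linarith [sum_norm_sq_powerCharSum_mul_le hψ hk h₂,
          sum_norm_sq_powerCharSum_mul_le hψ hk h₃]

theorem le_card_diagonal_zeros [DecidableEq F] (hk : 0 < k) {c₁ c₂ c₃ : F} (h₁ : c₁ ≠ 0)
    (h₂ : c₂ ≠ 0) (h₃ : c₃ ≠ 0) :
    (Fintype.card F : ℝ) ^ 2 - 2 * k ^ 2 * √(Fintype.card F) * Fintype.card F ≤
      #{x : F × F × F | c₁ * x.1 ^ k + c₂ * x.2.1 ^ k + c₃ * x.2.2 ^ k = 0} := by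
  have hψ := AddChar.FiniteField.primitiveChar_to_Complex_isPrimitive F
  have card_pos : (0 : ℝ) < Fintype.card F := by exact_mod_cast Fintype.card_pos
  have remainder_le := norm_sum_erase_powerCharSum_mul_le hψ hk h₁ h₂ h₃
  have count := card_mul_card_diagonal_zeros hψ k c₁ c₂ c₃
  rw [← add_sum_erase _ _ (mem_univ (0 : F))] at count
  simp only [zero_mul, powerCharSum_zero] at count
  rw [← sub_eq_iff_eq_add'.mpr count] at remainder_le
  norm_cast at remainder_le
  push_cast [Int.subNatNat_eq_coe] at remainder_le
  refine le_of_mul_le_mul_left ?_ card_pos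
  linarith [(abs_le.mp remainder_le).1]

theorem card_diagonal_zeros_last_zero_le [DecidableEq F] (hk : 0 < k) (c₁ : F) {c₂ : F}
    (h₂ : c₂ ≠ 0) :
    #{x : F × F × F | c₁ * x.1 ^ k + c₂ * x.2.1 ^ k = 0 ∧ x.2.2 = 0} ≤ Fintype.card F * k := by
  let cover : Finset (F × F × F) :=
    univ.biUnion fun r => ({r} : Finset F) ×ˢ
      (({s : F | s ^ k = -(c₁ * r ^ k) / c₂} : Finset F) ×ˢ ({0} : Finset F))
  have subset_cover : ({x : F × F × F | c₁ * x.1 ^ k + c₂ * x.2.1 ^ k = 0 ∧ x.2.2 = 0} :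
      Finset (F × F × F)) ⊆ cover := by
    rintro ⟨r, s, w⟩ hx
    simp only [mem_filter, mem_univ, true_and] at hx
    simp only [cover, mem_biUnion, mem_univ, true_and, mem_product, mem_singleton, mem_filter]
    exact ⟨r, rfl, by rw [eq_div_iff h₂]; linear_combination hx.1, hx.2⟩
  refine (card_le_card subset_cover).trans (card_biUnion_le_card_mul _ _ k fun r _ => ?_)
  simpa using card_filter_pow_eq_le hk _

theorem card_diagonal_zeros_ratio_mem_le [DecidableEq F] (hk : 0 < k) (c₁ : F) {c₂ : F} (c₃ : F)
    (h₂ : c₂ ≠ 0) (E : Finset F) :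
    #{x : F × F × F | c₁ * x.1 ^ k + c₂ * x.2.1 ^ k + c₃ * x.2.2 ^ k = 0 ∧
        ∃ e ∈ E, x.1 ^ k = e * x.2.2 ^ k} ≤ #E * Fintype.card F * k ^ 2 := by
  let cover : Finset (F × F × F) := (E ×ˢ univ).biUnion fun p =>
    ({r : F | r ^ k = p.1 * p.2 ^ k} : Finset F) ×ˢ
      (({s : F | s ^ k = -(c₁ * p.1 + c₃) * p.2 ^ k / c₂} : Finset F) ×ˢ ({p.2} : Finset F))
  have subset_cover : ({x : F × F × F | c₁ * x.1 ^ k + c₂ * x.2.1 ^ k + c₃ * x.2.2 ^ k = 0 ∧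
      ∃ e ∈ E, x.1 ^ k = e * x.2.2 ^ k} : Finset (F × F × F)) ⊆ cover := by
    rintro ⟨r, s, w⟩ hx
    simp only [mem_filter, mem_univ, true_and] at hx
    obtain ⟨hzero, e, he, hr⟩ := hx
    simp only [cover, mem_biUnion, mem_univ, and_true, mem_product, mem_singleton, mem_filter,
      true_and]
    refine ⟨(e, w), he, hr, ?_, rfl⟩
    rw [eq_div_iff h₂]
    linear_combination hzero - c₁ * hr
  refine (card_le_card subset_cover).trans
    ((card_biUnion_le_card_mul _ _ (k ^ 2) fun p _ => ?_).trans_eq (by simp))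
  rw [card_product, card_product, card_singleton, mul_one, sq]
  exact Nat.mul_le_mul (card_filter_pow_eq_le hk _) (card_filter_pow_eq_le hk _)

theorem mul_lt_sq_sub_mul_sqrt_mul {a b q : ℝ} (ha : 0 ≤ a) (hab : 1 ≤ a + b)
    (hq : (a + b) ^ 2 < q) : a * q < q ^ 2 - b * √q * q := by
  have lt_sqrt : a + b < √q := Real.lt_sqrt_of_sq_lt hq
  have mul_self_sqrt : √q * √q = q := Real.mul_self_sqrt (by nlinarith)
  have main_lt : a + b * √q < q := by nlinarith
  nlinarith

theorem exists_pow_add_pow_eq_of_card_lt (hk : 0 < k) {c₁ c₂ c₃ : F} (h₁ : c₁ ≠ 0) (h₂ : c₂ ≠ 0)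
    (h₃ : c₃ ≠ 0) (E : Finset F) (hcard : (k + (#E + 2) * k ^ 2) ^ 2 < Fintype.card F) :
    ∃ r s : F, c₁ * r ^ k + c₂ * s ^ k = c₃ ∧ r ^ k ∉ E := by
  classical
  by_contra! no_solution
  let atInfinity : Finset (F × F × F) := {x | c₁ * x.1 ^ k + c₂ * x.2.1 ^ k = 0 ∧ x.2.2 = 0}
  let badRatio : Finset (F × F × F) :=
    {x | c₁ * x.1 ^ k + c₂ * x.2.1 ^ k + -c₃ * x.2.2 ^ k = 0 ∧ ∃ e ∈ E, x.1 ^ k = e * x.2.2 ^ k}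
  have zeros_subset : ({x : F × F × F | c₁ * x.1 ^ k + c₂ * x.2.1 ^ k + -c₃ * x.2.2 ^ k = 0} :
      Finset (F × F × F)) ⊆ atInfinity ∪ badRatio := by
    rintro ⟨r, s, w⟩ hx
    simp only [atInfinity, badRatio, mem_union, mem_filter, mem_univ, true_and] at hx ⊢
    rcases eq_or_ne w 0 with rfl | hw
    · exact Or.inl ⟨by simpa [hk.ne'] using hx, rfl⟩
    · have ratio_mem := no_solution (r / w) (s / w) (by
        rw [div_pow, div_pow]
        field_simp
        linear_combination hx)
      exact Or.inr ⟨hx, _, ratio_mem, by rw [div_pow, div_mul_cancel₀ _ (pow_ne_zero k hw)]⟩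
  have upper := (card_le_card zeros_subset).trans <| (card_union_le _ _).trans <|
    add_le_add (card_diagonal_zeros_last_zero_le hk c₁ h₂)
      (card_diagonal_zeros_ratio_mem_le hk c₁ (-c₃) h₂ E)
  have lower := (le_card_diagonal_zeros hk h₁ h₂ (neg_ne_zero.mpr h₃)).trans
    (Nat.cast_le.mpr upper)
  push_cast at lower
  have one_le_k : (1 : ℝ) ≤ k := by exact_mod_cast hk
  have large := mul_lt_sq_sub_mul_sqrt_mul (a := k + #E * k ^ 2) (b := 2 * k ^ 2)
    (q := Fintype.card F) (by positivity) (by nlinarith [sq_nonneg (k : ℝ)])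
    (by rw [add_assoc, ← add_mul]; exact_mod_cast hcard)
  linarith

end DiagonalEquations

section RingHomToField

open Polynomial NumberField

variable {A B F : Type*} [CommRing A] [CommRing B] [Algebra A B] [Field F]

theorem exists_ringHom_extending_of_mem_conductor {θ : B} (φ : Algebra.adjoin A {θ} →+* F)
    {c : Algebra.adjoin A {θ}} (hc : (c : B) ∈ conductor A θ) (hφc : φ c ≠ 0) :
    ∃ ψ : B →+* F, ∀ y : Algebra.adjoin A {θ}, ψ y = φ y := by
  let m (b : B) : Algebra.adjoin A {θ} := ⟨c * b, hc b⟩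
  have m_coe (y : Algebra.adjoin A {θ}) : m y = c * y := rfl
  have m_mul (a b : B) : c * m (a * b) = m a * m b := by ext; simp [m]; ring
  have m_add (a b : B) : m (a + b) = m a + m b := by ext; simp [m, mul_add]
  have m_one : m 1 = c := by ext; simp [m]
  have m_zero : m 0 = 0 := by ext; simp [m]
  refine ⟨{ toFun := fun b ↦ φ (m b) / φ c
            map_one' := by rw [m_one, div_self hφc]
            map_mul' := fun a b ↦ ?_
            map_zero' := by rw [m_zero, map_zero, zero_div]
            map_add' := fun a b ↦ by rw [m_add, map_add, add_div] }, fun y ↦ ?_⟩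
  · rw [div_mul_div_comm, ← map_mul φ, ← m_mul, map_mul, mul_div_mul_left _ _ hφc]
  · change φ (m y) / φ c = φ y
    rw [m_coe, map_mul, mul_div_cancel_left₀ _ hφc]

theorem exists_algHom_adjoin_apply_eq_of_isRoot [IsDomain A] [IsIntegrallyClosed A] [IsDomain B]
    [Module.IsTorsionFree A B] [Algebra A F] {θ : B} (hθ : IsIntegral A θ) {x : F}
    (hx : aeval x (minpoly A θ) = 0) :
    ∃ φ : Algebra.adjoin A {θ} →ₐ[A] F, φ ⟨θ, Algebra.self_mem_adjoin_singleton A θ⟩ = x := by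
  let pb := Algebra.adjoin.powerBasis' hθ
  refine ⟨pb.lift x (by rwa [Algebra.adjoin.powerBasis'_minpoly_gen hθ] at hx), ?_⟩
  rw [← Algebra.adjoin.powerBasis'_gen hθ, pb.lift_gen]

theorem exists_ringHom_ringOfIntegers_apply_eq_of_simple_root {K : Type*} [Field K]
    [NumberField K] {θ : 𝓞 K} (hθ : Algebra.adjoin ℚ {(θ : K)} = ⊤) {x : F}
    (hx : aeval x (minpoly ℤ θ) = 0) (hx' : aeval x (derivative (minpoly ℤ θ)) ≠ 0) :
    ∃ φ : 𝓞 K →+* F, φ θ = x := by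
  set θ₀ : Algebra.adjoin ℤ {θ} := ⟨θ, Algebra.self_mem_adjoin_singleton ℤ θ⟩
  obtain ⟨φ, hφ⟩ := exists_algHom_adjoin_apply_eq_of_isRoot (RingOfIntegers.isIntegral θ) hx
  have coe_aeval (g : ℤ[X]) : ((aeval θ₀ g : Algebra.adjoin ℤ {θ}) : 𝓞 K) = aeval θ g :=
    (aeval_algHom_apply (Algebra.adjoin ℤ {θ}).val θ₀ g).symm
  have hcond : aeval θ (derivative (minpoly ℤ θ)) ∈ conductor ℤ θ := by
    have h := (conductor_mul_differentIdeal ℤ ℚ K θ hθ).ge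
    exact Ideal.mul_le_left (h (Ideal.mem_span_singleton_self _))
  have hφ' : φ (aeval θ₀ (derivative (minpoly ℤ θ))) ≠ 0 := by
    rwa [← aeval_algHom_apply, hφ]
  obtain ⟨ψ, hψ⟩ := exists_ringHom_extending_of_mem_conductor (φ : Algebra.adjoin ℤ {θ} →+* F)
    ((coe_aeval _).symm ▸ hcond) hφ'
  exact ⟨ψ, (hψ θ₀).trans hφ⟩

end RingHomToField

section ClassNumberCriterion

open NumberField

open scoped Nat in
theorem dvd_factorial_of_totient_le {m n : ℕ} (hm : 0 < m) (h : φ m ≤ n) : m ∣ (2 * n)! := by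
  rw [Nat.dvd_iff_prime_pow_dvd_dvd]
  intro p k hp hdvd
  rcases k with - | k
  · simp
  have hpow : φ (p ^ (k + 1)) ≤ n :=
    (Nat.le_of_dvd (Nat.totient_pos.mpr hm) (Nat.totient_dvd_of_dvd hdvd)).trans h
  refine Nat.dvd_factorial (pow_pos hp.pos _) ?_
  have hp2 : p ≤ 2 * (p - 1) := by have := hp.two_le; omega
  calc p ^ (k + 1) ≤ p ^ k * (2 * (p - 1)) := by rw [pow_succ]; gcongr
    _ = 2 * φ (p ^ (k + 1)) := by rw [Nat.totient_prime_pow_succ hp]; ring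
    _ ≤ 2 * n := by gcongr

variable {K : Type*} [Field K] [NumberField K]

variable (K) in
open scoped Nat in
theorem torsionOrder_dvd_factorial_finrank :
    Units.torsionOrder K ∣ (2 * Module.finrank ℚ K)! := by
  obtain ⟨ζ, hζ⟩ : ∃ ζ : Units.torsion K, orderOf ζ = Units.torsionOrder K := by
    exact IsCyclic.exists_ofOrder_eq_natCard
  have hprim : IsPrimitiveRoot ((ζ : (𝓞 K)ˣ) : K) (Units.torsionOrder K) := by
    rw [← hζ]
    exact (IsPrimitiveRoot.coe_units_iff.mpr (IsPrimitiveRoot.coe_submonoidClass_iff.mpr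
      (.orderOf ζ))).map_of_injective RingOfIntegers.coe_injective
  have hpos : 0 < Units.torsionOrder K := Units.torsionOrder_pos K
  refine dvd_factorial_of_totient_le hpos ?_
  have : NeZero (Units.torsionOrder K) := ⟨hpos.ne'⟩
  have hInt := hprim.isIntegral hpos
  calc φ (Units.torsionOrder K) ≤ (minpoly ℤ ((ζ : (𝓞 K)ˣ) : K)).natDegree :=
        hprim.totient_le_degree_minpoly
    _ = (minpoly ℚ ((ζ : (𝓞 K)ˣ) : K)).natDegree := by
        rw [minpoly.isIntegrallyClosed_eq_field_fractions' ℚ hInt,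
          (minpoly.monic hInt).natDegree_map]
    _ ≤ Module.finrank ℚ K := minpoly.natDegree_le _

theorem exists_pow_eq_unit_mul_pow_of_span_eq_pow {x : 𝓞 K} (hx : x ≠ 0) {I : Ideal (𝓞 K)}
    {l m p : ℕ} (hl : l ≠ 0) (hI : Ideal.span {x} = I ^ l) (hdvd : classNumber K * p ∣ l * m) :
    ∃ (v : (𝓞 K)ˣ) (d : 𝓞 K), x ^ m = v * d ^ p := by
  obtain ⟨c, hc⟩ := hdvd
  have hI0 : I ≠ ⊥ := by
    rintro rfl
    rw [← Ideal.zero_eq_bot, zero_pow hl, Ideal.zero_eq_bot, Ideal.span_singleton_eq_bot] at hI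
    exact hx hI
  obtain ⟨b, hb⟩ : ∃ b, I ^ classNumber K = Ideal.span {b} := by
    have hcl : ClassGroup.mk0 (⟨I, mem_nonZeroDivisors_of_ne_zero hI0⟩ ^ classNumber K) = 1 := by
      rw [map_pow]
      exact pow_card_eq_one
    exact ((ClassGroup.mk0_eq_one_iff _).mp hcl).principal
  have hspan : Ideal.span {x ^ m} = Ideal.span {(b ^ c) ^ p} := by
    rw [← Ideal.span_singleton_pow, hI, ← Ideal.span_singleton_pow, ← Ideal.span_singleton_pow,
      ← hb, ← pow_mul, ← pow_mul, ← pow_mul, hc]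
    congr 1
    ring
  obtain ⟨v, hv⟩ := (Ideal.span_singleton_eq_span_singleton.mp hspan).symm
  exact ⟨v, b ^ c, by rw [← hv, mul_comm]⟩

theorem exists_sum_mul_dvd_of_card_lt {ι κ : Type*} [Fintype ι] [Fintype κ] {p : ℕ}
    (hp : p.Prime) (h : Fintype.card κ < Fintype.card ι) (k : ι → κ → ℤ) :
    ∃ e : ι → ℕ, (∃ i, ¬ p ∣ e i) ∧ ∀ s, (p : ℤ) ∣ ∑ j, e j * k j s := by
  have : Fact p.Prime := ⟨hp⟩
  have hdep : ¬ LinearIndependent (ZMod p) (fun j s ↦ (k j s : ZMod p)) := fun hli ↦ by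
    have := hli.fintype_card_le_finrank
    rw [Module.finrank_pi] at this
    omega
  obtain ⟨g, hg, i, hi⟩ := Fintype.not_linearIndependent_iff.mp hdep
  refine ⟨fun j ↦ (g j).val, ⟨i, ?_⟩, fun s ↦ ?_⟩
  · rwa [← ZMod.natCast_eq_zero_iff, ZMod.natCast_zmod_val]
  · rw [← ZMod.intCast_zmod_eq_zero_iff_dvd]
    simpa using congrFun hg s

theorem prod_zpow_eq_zpow_sum {ι G : Type*} [CommGroup G] (s : Finset ι) (g : G) (k : ι → ℤ) :
    ∏ j ∈ s, g ^ k j = g ^ ∑ j ∈ s, k j :=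
  (map_sum (zmultiplesHom (Additive G) (Additive.ofMul g)) k s).symm

theorem exists_prod_pow_eq_torsion_mul_pow {ι : Type*} [Fintype ι] {p : ℕ} (hp : p.Prime)
    (h : Units.rank K < Fintype.card ι) (v : ι → (𝓞 K)ˣ) :
    ∃ e : ι → ℕ, (∃ i, ¬ p ∣ e i) ∧
      ∃ ζ ∈ Units.torsion K, ∃ w : (𝓞 K)ˣ, ∏ j, v j ^ e j = ζ * w ^ p := by
  choose ζk hζk using fun j ↦ (Units.exist_unique_eq_mul_prod K (v j)).exists
  obtain ⟨e, hei, he⟩ := exists_sum_mul_dvd_of_card_lt hp (by simpa using h) fun j ↦ (ζk j).2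
  choose q hq using he
  refine ⟨e, hei, ∏ j, ((ζk j).1 : (𝓞 K)ˣ) ^ e j,
    Subgroup.prod_mem _ fun j _ ↦ Subgroup.pow_mem _ (ζk j).1.2 _,
    ∏ s, Units.fundSystem K s ^ q s, ?_⟩
  have hfund (s : Fin (Units.rank K)) : ∏ j, (Units.fundSystem K s ^ (ζk j).2 s) ^ e j =
      (Units.fundSystem K s ^ q s) ^ p := by
    simp only [← zpow_natCast, ← zpow_mul]
    rw [prod_zpow_eq_zpow_sum, mul_comm (q s), ← hq s]
    simp only [mul_comm]
  calc ∏ j, v j ^ e j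
      = ∏ j, ((ζk j).1 : (𝓞 K)ˣ) ^ e j * ∏ s, (Units.fundSystem K s ^ (ζk j).2 s) ^ e j := by
        refine Finset.prod_congr rfl fun j _ ↦ ?_
        conv_lhs => rw [hζk j]
        rw [mul_pow, Finset.prod_pow]
    _ = _ := by
        rw [Finset.prod_mul_distrib, Finset.prod_comm, Finset.prod_congr rfl fun s _ ↦ hfund s,
          Finset.prod_pow]

theorem exists_prime_mul_dvd_mul_of_not_dvd {h l : ℕ} (hh : h ≠ 0) (hlh : ¬ l ∣ h) :
    ∃ p : ℕ, p.Prime ∧ p ∣ l ∧ ∃ m, ¬ p ∣ m ∧ h * p ∣ l * m := by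
  rw [Nat.dvd_iff_prime_pow_dvd_dvd] at hlh
  push Not at hlh
  obtain ⟨p, k, hp, hpl, hph⟩ := hlh
  obtain ⟨v, m, hpm, rfl⟩ := Nat.exists_eq_pow_mul_and_not_dvd hh p hp.ne_one
  have hvk : v + 1 ≤ k := by
    by_contra! hkv
    exact hph ((pow_dvd_pow p (by lia)).mul_right _)
  have hpvl : p ^ (v + 1) ∣ l := (pow_dvd_pow p hvk).trans hpl
  refine ⟨p, hp, (dvd_pow_self p v.succ_ne_zero).trans hpvl, m, hpm, ?_⟩
  calc p ^ v * m * p = p ^ (v + 1) * m := by ring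
    _ ∣ l * m := by gcongr

theorem exists_prod_pow_eq_of_not_dvd_classNumber {ι : Type*} [Fintype ι]
    (hι : Units.rank K < Fintype.card ι) {l : ℕ} (hl : l ≠ 0) {x : ι → 𝓞 K} (hx0 : ∀ j, x j ≠ 0)
    (hx : ∀ j, ∃ I : Ideal (𝓞 K), Ideal.span {x j} = I ^ l) (hdvd : ¬ l ∣ classNumber K) :
    ∃ p : ℕ, p.Prime ∧ p ∣ l ∧ ∃ e : ι → ℕ, (∃ i, ¬ p ∣ e i) ∧
      ∃ ζ ∈ Units.torsion K, ∃ g : 𝓞 K, ∏ j, x j ^ e j = ζ * g ^ p := by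
  obtain ⟨p, hp, hpl, m, hpm, hm⟩ :=
    exists_prime_mul_dvd_mul_of_not_dvd (Fintype.card_ne_zero : classNumber K ≠ 0) hdvd
  choose I hI using hx
  choose v d hvd using fun j ↦ exists_pow_eq_unit_mul_pow_of_span_eq_pow (hx0 j) hl (hI j) hm
  obtain ⟨e, ⟨i, hi⟩, ζ, hζ, w, hw⟩ := exists_prod_pow_eq_torsion_mul_pow hp hι v
  refine ⟨p, hp, hpl, fun j ↦ m * e j, ⟨i, fun h ↦ (hp.dvd_mul.mp h).elim hpm hi⟩,
    ζ, hζ, w * ∏ j, d j ^ e j, ?_⟩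
  calc ∏ j, x j ^ (m * e j)
      = ((∏ j, v j ^ e j : (𝓞 K)ˣ) : 𝓞 K) * (∏ j, d j ^ e j) ^ p := by
        push_cast
        rw [← Finset.prod_pow, ← Finset.prod_mul_distrib]
        refine Finset.prod_congr rfl fun j _ ↦ ?_
        rw [pow_mul, hvd, mul_pow, ← pow_mul, ← pow_mul, mul_comm p]
    _ = ζ * (w * ∏ j, d j ^ e j) ^ p := by
        rw [hw]
        push_cast
        ring

/-- The nonzero family `y` has exactly one entry, `y i`, that is not a `p`-th power. In a residue
field of a number field such a pattern certifies that `p` divides the exponent of the `i`-th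
element in every relation `∏ x j ^ e j = ζ * g ^ p` between its integers. -/
structure IsUniqueNonPower {ι F : Type*} [CommRing F] (p : ℕ) (y : ι → F) (i : ι) : Prop where
  ne_zero : ∀ j, y j ≠ 0
  not_pow : ¬ ∃ r, r ^ p = y i
  pow : ∀ j, j ≠ i → ∃ r, r ^ p = y j

theorem exists_pow_eq_of_pow_eq_pow {F : Type*} [Field F] {y w : F} {e p : ℕ} (hy : y ≠ 0)
    (hco : p.Coprime e) (h : y ^ e = w ^ p) : ∃ r, r ^ p = y := by
  have hw (k : ℤ) : (w ^ k) ^ p = y ^ (e * k) := by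
    rw [← zpow_natCast (w ^ k), ← zpow_mul, mul_comm, zpow_mul, zpow_natCast, ← h,
      ← zpow_natCast y e, ← zpow_mul]
  refine ⟨w ^ p.gcdB e * y ^ p.gcdA e, ?_⟩
  have hbezout := Nat.gcd_eq_gcd_ab p e
  rw [hco.gcd_eq_one] at hbezout
  rw [mul_pow, hw, ← zpow_natCast (y ^ _), ← zpow_mul, ← zpow_add₀ hy,
    show (e * p.gcdB e + p.gcdA e * p : ℤ) = 1 by push_cast at hbezout; linarith, zpow_one]

theorem IsUniqueNonPower.dvd_exponent {ι F : Type*} [Fintype ι] [Field F] {p : ℕ} {y : ι → F}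
    {i : ι} (hy : IsUniqueNonPower p y i) (hp : p.Prime) {e : ι → ℕ} {w : F}
    (h : ∏ j, y j ^ e j = w ^ p) : p ∣ e i := by
  classical
  by_contra hpe
  choose! r hr using hy.pow
  have hrest : ∏ j ∈ Finset.univ.erase i, y j ^ e j =
      (∏ j ∈ Finset.univ.erase i, r j ^ e j) ^ p := by
    rw [← Finset.prod_pow]
    refine Finset.prod_congr rfl fun j hj ↦ ?_
    rw [← hr j (Finset.ne_of_mem_erase hj), ← pow_mul, ← pow_mul, mul_comm]
  have hrest0 : ∏ j ∈ Finset.univ.erase i, y j ^ e j ≠ 0 :=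
    Finset.prod_ne_zero_iff.mpr fun j _ ↦ pow_ne_zero _ (hy.ne_zero j)
  rw [← Finset.mul_prod_erase _ _ (Finset.mem_univ i), ← eq_div_iff hrest0, hrest,
    ← div_pow] at h
  exact hy.not_pow (exists_pow_eq_of_pow_eq_pow (hy.ne_zero i)
    ((hp.coprime_iff_not_dvd).mpr hpe) h)

theorem exists_pow_eq_of_pow_eq_one_of_mul_dvd_card {F : Type*} [Field F] [Fintype F] {z : F}
    {m p : ℕ} (hm : m ≠ 0) (hz : z ^ m = 1) (hdvd : p * m ∣ Fintype.card F - 1) :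
    ∃ r, r ^ p = z := by
  obtain ⟨g, hg⟩ := IsCyclic.exists_generator (α := Fˣ)
  obtain ⟨u, rfl⟩ : IsUnit z := IsUnit.of_pow_eq_one hz hm
  obtain ⟨k, rfl : g ^ k = u⟩ := mem_powers_iff_mem_zpowers.mpr (hg u)
  have hgk : g ^ (k * m) = 1 := by
    rw [pow_mul, ← Units.val_eq_one, Units.val_pow_eq_pow_val, hz]
  have hcard : p * m ∣ k * m := by
    rw [← Nat.card_eq_fintype_card, ← Nat.card_units, ← orderOf_eq_card_of_forall_mem_zpowers hg]
      at hdvd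
    exact hdvd.trans (orderOf_dvd_of_pow_eq_one hgk)
  obtain ⟨c, rfl⟩ := Nat.dvd_of_mul_dvd_mul_right (Nat.pos_of_ne_zero hm) hcard
  exact ⟨(g ^ c : Fˣ), by push_cast; rw [← pow_mul, mul_comm]⟩

theorem dvd_classNumber_of_isUniqueNonPower {ι : Type*} [Fintype ι]
    (hι : Units.rank K < Fintype.card ι) {l : ℕ} (hl : l ≠ 0) {x : ι → 𝓞 K}
    (hx : ∀ j, ∃ I : Ideal (𝓞 K), Ideal.span {x j} = I ^ l)
    (hloc : ∀ p : ℕ, p.Prime → p ∣ l → ∀ i, ∃ Q : ℕ, ∃ _ : Fact Q.Prime,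
      p * Units.torsionOrder K ∣ Q - 1 ∧
        ∃ φ : 𝓞 K →+* ZMod Q, IsUniqueNonPower p (fun j ↦ φ (x j)) i) :
    l ∣ classNumber K := by
  by_contra hdvd
  have hx0 (j : ι) : x j ≠ 0 := by
    obtain ⟨p, hp, hpl⟩ := Nat.exists_prime_and_dvd (n := l) (by rintro rfl; exact hdvd (one_dvd _))
    obtain ⟨Q, hQ, -, φ, hφ⟩ := hloc p hp hpl j
    exact fun h ↦ hφ.ne_zero j (by rw [h, map_zero])
  obtain ⟨p, hp, hpl, e, ⟨i, hi⟩, ζ, hζ, g, hg⟩ :=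
    exists_prod_pow_eq_of_not_dvd_classNumber hι hl hx0 hx hdvd
  obtain ⟨Q, hQ, hQp, φ, hφ⟩ := hloc p hp hpl i
  have hζ1 : φ ζ ^ Units.torsionOrder K = 1 := by
    rw [← Units.rootsOfUnity_eq_torsion, mem_rootsOfUnity] at hζ
    rw [← map_pow, ← Units.val_pow_eq_pow_val, hζ, Units.val_one, map_one]
  obtain ⟨r, hr⟩ := exists_pow_eq_of_pow_eq_one_of_mul_dvd_card (Units.torsionOrder_ne_zero K)
    hζ1 (by rwa [ZMod.card])
  refine hi (hφ.dvd_exponent hp (w := r * φ g) ?_)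
  rw [mul_pow, hr]
  simpa only [map_prod, map_pow, map_mul] using congrArg φ hg

end ClassNumberCriterion

section UnitRank

open Polynomial NumberField

theorem multiset_sum_sq_eq {R : Type*} [CommRing R] (s : Multiset R) :
    s.sum ^ 2 = (s.map (· ^ 2)).sum + 2 * s.esymm 2 := by
  induction s using Multiset.induction with
  | empty => simp [Multiset.esymm, Multiset.powersetCard_zero_right]
  | cons a s ih =>
    have hesymm : (a ::ₘ s).esymm 2 = s.esymm 2 + a * s.sum := by
      have := Multiset.sum_map_mul_left (s := s) (a := a) (f := fun x ↦ x)
      simpa [Multiset.esymm, Multiset.powersetCard_cons, Multiset.powersetCard_one] using this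
    rw [hesymm]
    simp only [Multiset.sum_cons, Multiset.map_cons]
    linear_combination ih

theorem coeff_natDegree_sub_two_nonpos_of_splits {F : Type*} [Field F] [LinearOrder F]
    [IsStrictOrderedRing F] {g : F[X]} (hg : g.Splits) (hmonic : g.Monic) (hdeg : 2 ≤ g.natDegree)
    (hnext : g.coeff (g.natDegree - 1) = 0) : g.coeff (g.natDegree - 2) ≤ 0 := by
  have hcard := hg.natDegree_eq_card_roots.symm
  have hsum : g.roots.sum = 0 := by
    have := coeff_eq_esymm_roots_of_card hcard (k := g.natDegree - 1) (by omega)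
    rw [hnext, hmonic.leadingCoeff, Nat.sub_sub_self (by omega)] at this
    simpa [Multiset.esymm, Multiset.powersetCard_one] using this
  have hesymm : g.coeff (g.natDegree - 2) = g.roots.esymm 2 := by
    rw [coeff_eq_esymm_roots_of_card hcard (by omega), hmonic.leadingCoeff,
      Nat.sub_sub_self hdeg]
    ring
  have hsq : 0 ≤ (g.roots.map (· ^ 2)).sum := by
    refine Multiset.sum_nonneg fun x hx ↦ ?_
    obtain ⟨r, -, rfl⟩ := Multiset.mem_map.mp hx
    exact sq_nonneg r
  have := multiset_sum_sq_eq g.roots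
  rw [hsum] at this
  linarith

variable {K : Type*} [Field K] [NumberField K]

theorem splits_minpoly_map_real_of_isTotallyReal [IsTotallyReal K] (x : K) :
    ((minpoly ℚ x).map (algebraMap ℚ ℝ)).Splits := by
  refine Splits.of_splits_map (algebraMap ℝ ℂ) (IsAlgClosed.splits _) fun z hz ↦ ?_
  rw [Polynomial.map_map, ← IsScalarTower.algebraMap_eq] at hz
  obtain ⟨φ, rfl⟩ : z ∈ Set.range fun φ : K →+* ℂ ↦ φ x := by
    rw [Embeddings.range_eval_eq_rootSet_minpoly, rootSet_def]
    simpa [aroots] using hz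
  have hφ : ComplexEmbedding.IsReal φ :=
    InfinitePlace.isReal_mk_iff.mp (IsTotallyReal.isReal _)
  exact ⟨hφ.embedding x, hφ.coe_embedding_apply x⟩

theorem rank_add_one_lt_finrank_of_not_isTotallyReal (h : ¬ IsTotallyReal K) :
    Units.rank K + 1 < Module.finrank ℚ K := by
  have hcomplex : 0 < InfinitePlace.nrComplexPlaces K :=
    Nat.pos_of_ne_zero (nrComplexPlaces_eq_zero_iff.not.mpr h)
  have hdeg := InfinitePlace.card_add_two_mul_card_eq_rank K
  have hplaces := InfinitePlace.card_eq_nrRealPlaces_add_nrComplexPlaces K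
  unfold Units.rank
  omega

theorem rank_add_one_lt_finrank_of_coeff_minpoly {θ : 𝓞 K} (hdeg : 2 ≤ (minpoly ℤ θ).natDegree)
    (hnext : (minpoly ℤ θ).coeff ((minpoly ℤ θ).natDegree - 1) = 0)
    (hpos : 0 < (minpoly ℤ θ).coeff ((minpoly ℤ θ).natDegree - 2)) :
    Units.rank K + 1 < Module.finrank ℚ K := by
  refine rank_add_one_lt_finrank_of_not_isTotallyReal fun _ ↦ hpos.not_ge ?_
  have hmonic : (minpoly ℤ θ).Monic := minpoly.monic (RingOfIntegers.isIntegral θ)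
  have hmap : (minpoly ℚ (θ : K)).map (algebraMap ℚ ℝ) =
      (minpoly ℤ θ).map (algebraMap ℤ ℝ) := by
    rw [minpoly.isIntegrallyClosed_eq_field_fractions ℚ K (RingOfIntegers.isIntegral θ),
      Polynomial.map_map, ← IsScalarTower.algebraMap_eq]
  have hnat : ((minpoly ℤ θ).map (algebraMap ℤ ℝ)).natDegree = (minpoly ℤ θ).natDegree :=
    hmonic.natDegree_map _
  have h := coeff_natDegree_sub_two_nonpos_of_splits
    (hmap ▸ splits_minpoly_map_real_of_isTotallyReal (θ : K)) (hmonic.map _)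
  rw [hnat, coeff_map, coeff_map, hnext, map_zero, eq_intCast] at h
  exact_mod_cast h hdeg rfl

end UnitRank

section PolynomialCriterion

open Polynomial NumberField

theorem exists_span_sub_eq_pow_of_eval_eq_pow {A R : Type*} [CommRing A] [CommRing R]
    [IsDedekindDomain R] [Algebra A R] {f : A[X]} {θ : R} (hθ : aeval θ f = 0) {a u : A} {l : ℕ}
    (hfa : f.eval a = u ^ l) (hcop : IsCoprime (f.derivative.eval a) u) :
    ∃ I : Ideal R, Ideal.span {θ - algebraMap A R a} = I ^ l := by
  set t := θ - algebraMap A R a with ht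
  set d := algebraMap A R (f.derivative.eval a) with hd
  obtain ⟨k, hk⟩ := binomExpansion (f.map (algebraMap A R)) (algebraMap A R a) t
  rw [ht, add_sub_cancel, eval_map_algebraMap, hθ, derivative_map, eval_map_apply, eval_map_apply,
    hfa, map_pow, ← ht, ← hd] at hk
  have hprod : t * (-(d + k * t)) = algebraMap A R u ^ l := by linear_combination hk
  have hcop' : IsCoprime t (-(d + k * t)) := by
    obtain ⟨x, y, hxy⟩ := (hcop.map (algebraMap A R)).pow_right (n := l)
    exact ⟨x * (-k) + y * (-(d + k * t)), -x, by linear_combination hxy + y * hprod⟩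
  have hspan : Ideal.span {t} * Ideal.span {-(d + k * t)} = Ideal.span {algebraMap A R u} ^ l := by
    rw [Ideal.span_singleton_mul_span_singleton, hprod, Ideal.span_singleton_pow]
  let _ : GCDMonoid (Ideal R) := UniqueFactorizationMonoid.toGCDMonoid _
  exact exists_eq_pow_of_mul_eq_pow_of_coprime
    ((Ideal.isCoprime_span_singleton_iff _ _).mpr hcop') hspan

/-- The polynomial `f` has a simple root `x` in `F` for which `x - a i` is the only one of the
differences `x - a j` that is not a `p`-th power. This is the condition modulo an auxiliary prime
that keeps the `i`-th difference out of the multiplicative relations modulo `p`-th powers. -/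
def HasSeparatingRoot {ι F : Type*} [Field F] (f : F[X]) (a : ι → F) (p : ℕ) (i : ι) : Prop :=
  ∃ x, f.eval x = 0 ∧ f.derivative.eval x ≠ 0 ∧ IsUniqueNonPower p (fun j ↦ x - a j) i

open scoped Nat in
theorem dvd_classNumber_of_hasSeparatingRoot {K : Type*} [Field K] [NumberField K] {θ : 𝓞 K}
    (hθ : Algebra.adjoin ℚ {(θ : K)} = ⊤) {ι : Type*} [Fintype ι]
    (hι : Units.rank K < Fintype.card ι) {l : ℕ} (hl : l ≠ 0) {a u : ι → ℤ}
    (ha : ∀ j, (minpoly ℤ θ).eval (a j) = u j ^ l)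
    (hcop : ∀ j, IsCoprime ((minpoly ℤ θ).derivative.eval (a j)) (u j))
    (hloc : ∀ p : ℕ, p.Prime → p ∣ l → ∀ i, ∃ Q : ℕ, ∃ _ : Fact Q.Prime,
      p * (2 * Module.finrank ℚ K)! ∣ Q - 1 ∧
        HasSeparatingRoot ((minpoly ℤ θ).map (Int.castRingHom (ZMod Q))) (fun j ↦ a j) p i) :
    l ∣ classNumber K := by
  refine dvd_classNumber_of_isUniqueNonPower hι hl (x := fun j ↦ θ - algebraMap ℤ _ (a j))
    (fun j ↦ exists_span_sub_eq_pow_of_eval_eq_pow (minpoly.aeval ℤ θ) (ha j) (hcop j))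
    fun p hp hpl i ↦ ?_
  obtain ⟨Q, hQ, hQp, x, hx, hx', hnonpow⟩ := hloc p hp hpl i
  rw [← algebraMap_int_eq, eval_map_algebraMap] at hx
  rw [derivative_map, ← algebraMap_int_eq, eval_map_algebraMap] at hx'
  obtain ⟨ψ, rfl⟩ := exists_ringHom_ringOfIntegers_apply_eq_of_simple_root hθ hx hx'
  refine ⟨Q, hQ, (mul_dvd_mul_left p (torsionOrder_dvd_factorial_finrank K)).trans hQp, ψ, ?_⟩
  simpa using hnonpow

end PolynomialCriterion

section EisensteinRamification

open Polynomial NumberField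

variable {R S : Type*} [CommRing R] [CommRing S] [Algebra R S]

theorem mem_of_aeval_eq_zero_of_isWeaklyEisensteinAt {p : Ideal R} {f : R[X]}
    (hf : f.IsWeaklyEisensteinAt p) (hmonic : f.Monic) {x : S} (hx : aeval x f = 0)
    {P : Ideal S} [P.IsPrime] (hP : p.map (algebraMap R S) ≤ P) : x ∈ P :=
  Ideal.IsPrime.mem_of_pow_mem inferInstance _
    (hP (hf.pow_natDegree_le_of_aeval_zero_of_monic_mem_map hx hmonic _ le_rfl))

theorem aeval_divX_mem_of_isWeaklyEisensteinAt {p : Ideal R} {f : R[X]}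
    (hf : f.IsWeaklyEisensteinAt p) (hdeg : 2 ≤ f.natDegree) {x : S}
    {P : Ideal S} (hP : p.map (algebraMap R S) ≤ P) (hx : x ∈ P) : aeval x f.divX ∈ P := by
  rw [aeval_eq_sum_range]
  refine P.sum_mem fun k _ ↦ ?_
  rw [coeff_divX, Algebra.smul_def]
  rcases lt_or_ge (k + 1) f.natDegree with hk | hk
  · exact P.mul_mem_right _ (hP (Ideal.mem_map_of_mem _ (hf.mem hk)))
  · exact P.mul_mem_left _ (P.pow_mem_of_mem hx _ (by omega))

theorem algebraMap_mem_sq_of_isEisensteinAt [IsDomain R] [IsPrincipalIdealRing R] {q : R}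
    (hq : Prime q) {f : R[X]} (hf : f.IsEisensteinAt (Ideal.span {q})) (hmonic : f.Monic)
    (hdeg : 2 ≤ f.natDegree) {x : S} (hx : aeval x f = 0) {P : Ideal S} [P.IsPrime]
    (hqP : algebraMap R S q ∈ P) : algebraMap R S q ∈ P ^ 2 := by
  have hP : (Ideal.span {q}).map (algebraMap R S) ≤ P := by
    rwa [Ideal.map_span, Set.image_singleton, Ideal.span_singleton_le_iff_mem]
  have hxP := mem_of_aeval_eq_zero_of_isWeaklyEisensteinAt hf.isWeaklyEisensteinAt hmonic hx hP
  have hcoeff : algebraMap R S (f.coeff 0) ∈ P ^ 2 := by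
    have h := congrArg (aeval x) (divX_mul_X_add f)
    rw [hx, map_add, map_mul, aeval_X, aeval_C] at h
    rw [eq_neg_of_add_eq_zero_right h, sq]
    exact neg_mem (Ideal.mul_mem_mul
      (aeval_divX_mem_of_isWeaklyEisensteinAt hf.isWeaklyEisensteinAt hdeg hP hxP) hxP)
  obtain ⟨m, hm⟩ := Ideal.mem_span_singleton.mp (hf.coeff_mem (n := 0) (by omega))
  have hcop : IsCoprime m q := by
    refine ((Prime.coprime_iff_not_dvd hq).mpr fun ⟨c, hc⟩ ↦ hf.notMem ?_).symm
    rw [Ideal.span_singleton_pow, Ideal.mem_span_singleton]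
    exact ⟨c, by rw [hm, hc]; ring⟩
  obtain ⟨a, b, hab⟩ := hcop
  have hq_eq : q = a * f.coeff 0 + b * (q * q) := by
    rw [hm]
    linear_combination -q * hab
  rw [hq_eq, map_add, map_mul, map_mul, map_mul]
  exact add_mem (Ideal.mul_mem_left _ _ hcoeff)
    (Ideal.mul_mem_left _ _ (sq P ▸ Ideal.mul_mem_mul hqP hqP))

variable {K : Type*} [Field K] [NumberField K]

theorem dvd_discr_of_mem_sq {q : ℤ} (hq : Prime q) {P : Ideal (𝓞 K)} [P.IsPrime]
    (hqP : (q : 𝓞 K) ∈ P ^ 2) : q ∣ discr K := by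
  by_contra hndvd
  have hunramified := (not_dvd_discr_iff_forall_mem K (𝓞 K) hq).mp hndvd P inferInstance
    (Ideal.pow_le_self two_ne_zero hqP)
  have : (Ideal.span {q}).IsMaximal :=
    PrincipalIdealRing.isMaximal_of_irreducible hq.irreducible
  refine not_dvd_differentIdeal_iff.mpr hunramified ?_
  have hdvd := pow_sub_one_dvd_differentIdeal ℤ (p := Ideal.span {q}) P 2
    (by simpa using hq.ne_zero)
    (by simpa [Ideal.map_span, Ideal.dvd_span_singleton] using hqP)
  simpa using hdvd

theorem exists_isPrime_intCast_mem {q : ℤ} (hq : Prime q) :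
    ∃ P : Ideal (𝓞 K), P.IsPrime ∧ (q : 𝓞 K) ∈ P := by
  have : (Ideal.span {q}).IsPrime := (Ideal.span_singleton_prime hq.ne_zero).mpr hq
  obtain ⟨P, -, hP, hPq⟩ := Ideal.exists_ideal_over_prime_of_isIntegral
    (Ideal.span {q}) (⊥ : Ideal (𝓞 K))
    ((Ideal.comap_bot_of_injective _ (FaithfulSMul.algebraMap_injective ℤ (𝓞 K))).trans_le bot_le)
  exact ⟨P, hP, by simpa using hPq.ge (Ideal.mem_span_singleton_self q)⟩

theorem dvd_discr_of_isEisensteinAt {q : ℤ} (hq : Prime q) {θ : 𝓞 K}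
    (hdeg : 2 ≤ (minpoly ℤ θ).natDegree)
    (hf : (minpoly ℤ θ).IsEisensteinAt (Ideal.span {q})) : q ∣ discr K := by
  obtain ⟨P, _, hqP⟩ := exists_isPrime_intCast_mem (K := K) hq
  refine dvd_discr_of_mem_sq hq (P := P) ?_
  rw [← eq_intCast (algebraMap ℤ (𝓞 K))] at hqP ⊢
  exact algebraMap_mem_sq_of_isEisensteinAt hq hf (minpoly.monic (RingOfIntegers.isIntegral θ))
    hdeg (minpoly.aeval ℤ θ) hqP

end EisensteinRamification

section DiscriminantBound

open Polynomial NumberField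

theorem norm_aeval_le_of_norm_coeff_le {g : ℤ[X]} {d : ℕ} (hdeg : g.natDegree ≤ d) {B : ℝ}
    (hB : ∀ k ≤ d, |(g.coeff k : ℝ)| ≤ B) (z : ℂ) :
    ‖aeval z g‖ ≤ (d + 1) * B * max 1 ‖z‖ ^ d := by
  have hterm : ∀ k ∈ Finset.range (d + 1), ‖g.coeff k • z ^ k‖ ≤ B * max 1 ‖z‖ ^ d := by
    intro k hk
    have hkd : k ≤ d := Finset.mem_range_succ_iff.mp hk
    rw [zsmul_eq_mul, norm_mul, norm_pow, Complex.norm_intCast]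
    have hpow : ‖z‖ ^ k ≤ max 1 ‖z‖ ^ d :=
      (pow_le_pow_left₀ (norm_nonneg _) (le_max_right _ _) _).trans
        (pow_le_pow_right₀ (le_max_left _ _) hkd)
    exact mul_le_mul (hB k hkd) hpow (by positivity) ((abs_nonneg _).trans (hB k hkd))
  calc ‖aeval z g‖ ≤ ∑ k ∈ Finset.range (d + 1), ‖g.coeff k • z ^ k‖ := by
        rw [aeval_eq_sum_range' (Nat.lt_succ_of_le hdeg)]
        exact norm_sum_le _ _
    _ ≤ ∑ _ ∈ Finset.range (d + 1), B * max 1 ‖z‖ ^ d := Finset.sum_le_sum hterm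
    _ = (d + 1) * B * max 1 ‖z‖ ^ d := by
        rw [Finset.sum_const, Finset.card_range, nsmul_eq_mul]
        push_cast
        ring

theorem prod_max_one_norm_roots_le {f : ℤ[X]} (hmonic : f.Monic) {B : ℝ}
    (hB : ∀ k ≤ f.natDegree, |(f.coeff k : ℝ)| ≤ B) :
    (((f.map (algebraMap ℤ ℂ)).roots).map fun z ↦ max 1 ‖z‖).prod ≤ (f.natDegree + 1) * B := by
  have hmonic' : (f.map (algebraMap ℤ ℂ)).Monic := hmonic.map _
  refine (prod_max_one_norm_roots_le_mahlerMeasure_of_one_le_leadingCoeff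
    (by rw [hmonic'.leadingCoeff, norm_one])).trans ((mahlerMeasure_le_sum_norm_coeff _).trans ?_)
  rw [Polynomial.sum_over_range _ (by simp), hmonic.natDegree_map]
  calc ∑ k ∈ Finset.range (f.natDegree + 1), ‖(f.map (algebraMap ℤ ℂ)).coeff k‖
      ≤ ∑ _ ∈ Finset.range (f.natDegree + 1), B := by
        refine Finset.sum_le_sum fun k hk ↦ ?_
        simpa using hB k (Finset.mem_range_succ_iff.mp hk)
    _ = (f.natDegree + 1) * B := by simp

variable {K : Type*} [Field K] [NumberField K] {θ : 𝓞 K}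

theorem minpoly_rat_coe_eq_map (θ : 𝓞 K) :
    minpoly ℚ (θ : K) = (minpoly ℤ θ).map (algebraMap ℤ ℚ) :=
  minpoly.isIntegrallyClosed_eq_field_fractions ℚ K (RingOfIntegers.isIntegral θ)

theorem abs_discr_le_abs_norm_aeval_derivative_minpoly
    (hθ : Algebra.adjoin ℚ {(θ : K)} = ⊤) :
    |discr K| ≤ |Algebra.norm ℤ (aeval θ (derivative (minpoly ℤ θ)))| := by
  have hdvd := Ideal.absNorm_dvd_absNorm_of_le ((Ideal.span_singleton_le_iff_mem _).mpr
    (aeval_derivative_mem_differentIdeal ℤ ℚ K θ hθ))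
  rw [absNorm_differentIdeal K (𝓞 K), Ideal.absNorm_span_singleton, Int.natAbs_dvd_natAbs] at hdvd
  have hne : aeval θ (derivative (minpoly ℤ θ)) ≠ 0 := by
    have h := (Algebra.IsSeparable.isSeparable ℚ (θ : K)).aeval_derivative_ne_zero
      (minpoly.aeval ℚ (θ : K))
    rw [minpoly_rat_coe_eq_map, derivative_map, aeval_map_algebraMap] at h
    exact fun h0 ↦ h ((aeval_algebraMap_apply K θ _).trans (by rw [h0, map_zero]))
  exact Int.le_of_dvd (abs_pos.mpr (Algebra.norm_ne_zero_iff.mpr hne))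
    ((abs_dvd_abs _ _).mpr hdvd)

theorem natDegree_minpoly_eq_finrank (hθ : Algebra.adjoin ℚ {(θ : K)} = ⊤) :
    (minpoly ℤ θ).natDegree = Module.finrank ℚ K := by
  have hInt : IsIntegral ℚ (θ : K) := Algebra.IsIntegral.isIntegral _
  rw [(PowerBasis.ofAdjoinEqTop hInt hθ).finrank, PowerBasis.ofAdjoinEqTop_dim,
    minpoly_rat_coe_eq_map, (minpoly.monic (RingOfIntegers.isIntegral θ)).natDegree_map]

theorem prod_embeddings_eq_prod_roots_minpoly (hθ : Algebra.adjoin ℚ {(θ : K)} = ⊤)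
    (g : ℂ → ℝ) :
    ∏ σ : K →ₐ[ℚ] ℂ, g (σ θ) = (((minpoly ℤ θ).map (algebraMap ℤ ℂ)).roots.map g).prod := by
  classical
  have hInt : IsIntegral ℚ (θ : K) := Algebra.IsIntegral.isIntegral _
  let pb := PowerBasis.ofAdjoinEqTop hInt hθ
  have hmap : (minpoly ℤ θ).map (algebraMap ℤ ℂ) = (minpoly ℚ pb.gen).map (algebraMap ℚ ℂ) := by
    rw [PowerBasis.ofAdjoinEqTop_gen, minpoly_rat_coe_eq_map, Polynomial.map_map,
      ← IsScalarTower.algebraMap_eq]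
  have hnodup := nodup_roots (Separable.map (f := algebraMap ℚ ℂ)
    (Algebra.IsSeparable.isSeparable ℚ pb.gen))
  rw [hmap, Fintype.prod_equiv pb.liftEquiv' _ (fun y ↦ g y)
    fun σ ↦ by rw [pb.liftEquiv'_apply_coe]; rfl,
    Finset.prod_mem_multiset _ _ g fun _ ↦ rfl, Finset.prod_eq_multiset_prod,
    Multiset.toFinset_val, Multiset.dedup_eq_self.mpr hnodup]

theorem abs_norm_aeval_eq_prod_embeddings (θ : 𝓞 K) (g : ℤ[X]) :
    |(Algebra.norm ℤ (aeval θ g) : ℝ)| = ∏ σ : K →ₐ[ℚ] ℂ, ‖aeval (σ θ) g‖ := by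
  have hσ (σ : K →ₐ[ℚ] ℂ) : aeval (σ θ) g = σ (aeval θ g : 𝓞 K) := by
    exact (aeval_algHom_apply (σ.restrictScalars ℤ) (θ : K) g).trans
      (congrArg σ (aeval_algebraMap_apply K θ g))
  simp only [hσ]
  rw [← norm_prod, ← Algebra.norm_eq_prod_embeddings ℚ ℂ, ← Algebra.coe_norm_int]
  simp

theorem abs_norm_aeval_le (hθ : Algebra.adjoin ℚ {(θ : K)} = ⊤) {A B : ℝ}
    (hB : ∀ k ≤ (minpoly ℤ θ).natDegree, |((minpoly ℤ θ).coeff k : ℝ)| ≤ B)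
    {g : ℤ[X]} {d : ℕ} (hdeg : g.natDegree ≤ d) (hA : ∀ k ≤ d, |(g.coeff k : ℝ)| ≤ A) :
    |(Algebra.norm ℤ (aeval θ g) : ℝ)| ≤
      ((d + 1) * A) ^ (minpoly ℤ θ).natDegree * (((minpoly ℤ θ).natDegree + 1) * B) ^ d := by
  have hA0 : 0 ≤ A := (abs_nonneg _).trans (hA 0 d.zero_le)
  have hroots := prod_max_one_norm_roots_le (minpoly.monic (RingOfIntegers.isIntegral θ)) hB
  rw [← prod_embeddings_eq_prod_roots_minpoly hθ fun z ↦ max 1 ‖z‖] at hroots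
  calc |(Algebra.norm ℤ (aeval θ g) : ℝ)|
      = ∏ σ : K →ₐ[ℚ] ℂ, ‖aeval (σ θ) g‖ := abs_norm_aeval_eq_prod_embeddings θ g
    _ ≤ ∏ σ : K →ₐ[ℚ] ℂ, (d + 1) * A * max 1 ‖σ θ‖ ^ d :=
        Finset.prod_le_prod (fun _ _ ↦ norm_nonneg _)
          fun σ _ ↦ norm_aeval_le_of_norm_coeff_le hdeg hA _
    _ = ((d + 1) * A) ^ (minpoly ℤ θ).natDegree * (∏ σ : K →ₐ[ℚ] ℂ, max 1 ‖σ θ‖) ^ d := by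
        rw [Finset.prod_mul_distrib, Finset.prod_const, Finset.prod_pow, Finset.card_univ,
          AlgHom.card, natDegree_minpoly_eq_finrank hθ]
    _ ≤ _ := by gcongr

theorem coeff_natDegree_mul_sub_X_mul_derivative {R : Type*} [CommRing R] (f : R[X]) (k : ℕ) :
    (C (f.natDegree : R) * f - X * derivative f).coeff k = (f.natDegree - k) * f.coeff k := by
  rw [coeff_sub, coeff_C_mul]
  cases k with
  | zero => simp
  | succ k => rw [coeff_X_mul, coeff_derivative]; push_cast; ring

theorem natDegree_natDegree_mul_sub_X_mul_derivative_le {R : Type*} [CommRing R] {f : R[X]}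
    (hnext : f.coeff (f.natDegree - 1) = 0) :
    (C (f.natDegree : R) * f - X * derivative f).natDegree ≤ f.natDegree - 2 := by
  rw [natDegree_le_iff_coeff_eq_zero]
  intro k hk
  rw [coeff_natDegree_mul_sub_X_mul_derivative]
  rcases lt_trichotomy k f.natDegree with hlt | rfl | hgt
  · rw [show k = f.natDegree - 1 by omega, hnext, mul_zero]
  · rw [sub_self, zero_mul]
  · rw [coeff_eq_zero_of_natDegree_lt hgt, mul_zero]

theorem abs_norm_aeval_mul_abs_coeff_zero (hθ : Algebra.adjoin ℚ {(θ : K)} = ⊤) :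
    |Algebra.norm ℤ (aeval θ (derivative (minpoly ℤ θ)))| * |(minpoly ℤ θ).coeff 0| =
      |Algebra.norm ℤ (aeval θ (C ((minpoly ℤ θ).natDegree : ℤ) * minpoly ℤ θ -
        X * derivative (minpoly ℤ θ)))| := by
  have hnorm : |Algebra.norm ℤ θ| = |(minpoly ℤ θ).coeff 0| := by
    let pb := PowerBasis.ofAdjoinEqTop (Algebra.IsIntegral.isIntegral (R := ℚ) (θ : K)) hθ
    have h := Algebra.PowerBasis.norm_gen_eq_coeff_zero_minpoly pb
    rw [PowerBasis.ofAdjoinEqTop_gen, minpoly_rat_coe_eq_map, coeff_map, eq_intCast,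
      ← Algebra.coe_norm_int] at h
    have h' : Algebra.norm ℤ θ = (-1) ^ pb.dim * (minpoly ℤ θ).coeff 0 := by exact_mod_cast h
    rw [h', abs_mul, abs_pow, abs_neg, abs_one, one_pow, one_mul]
  have hneg : |Algebra.norm ℤ (-1 : 𝓞 K)| = 1 :=
    Int.isUnit_iff_abs_eq.mp (isUnit_neg_one.map _)
  have haeval : aeval θ (C ((minpoly ℤ θ).natDegree : ℤ) * minpoly ℤ θ -
      X * derivative (minpoly ℤ θ)) = -1 * (θ * aeval θ (derivative (minpoly ℤ θ))) := by
    simp [minpoly.aeval]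
  rw [haeval, map_mul, map_mul, abs_mul, abs_mul, hneg, hnorm, one_mul, mul_comm]

/- Up to sign `θ * f'(θ)` is the value at `θ` of `n * f - X * f'`, whose degree is only `n - 2`;
bounding the latter saves a factor `B` compared with bounding the norm of `f'(θ)` directly. -/
theorem abs_discr_mul_abs_coeff_zero_le (hθ : Algebra.adjoin ℚ {(θ : K)} = ⊤)
    (hdeg : 2 ≤ (minpoly ℤ θ).natDegree)
    (hnext : (minpoly ℤ θ).coeff ((minpoly ℤ θ).natDegree - 1) = 0) {B : ℝ}
    (hB : ∀ k ≤ (minpoly ℤ θ).natDegree, |((minpoly ℤ θ).coeff k : ℝ)| ≤ B) :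
    |(discr K : ℝ)| * |((minpoly ℤ θ).coeff 0 : ℝ)| ≤
      (((minpoly ℤ θ).natDegree + 1) ^ 2 * B) ^ (2 * ((minpoly ℤ θ).natDegree - 1)) := by
  set n := (minpoly ℤ θ).natDegree with hn
  set g := C (n : ℤ) * minpoly ℤ θ - X * derivative (minpoly ℤ θ) with hg
  have hB0 : 0 ≤ B := (abs_nonneg _).trans (hB 0 n.zero_le)
  have hcoeff : ∀ k ≤ n - 2, |(g.coeff k : ℝ)| ≤ n * B := by
    intro k hk
    rw [hg, coeff_natDegree_mul_sub_X_mul_derivative, ← hn, Int.cast_mul, abs_mul]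
    have hkn : |((n - k : ℤ) : ℝ)| ≤ n := by
      have : (k : ℝ) ≤ n := by exact_mod_cast (by omega : k ≤ n)
      push_cast
      rw [abs_of_nonneg (by linarith)]
      linarith [k.cast_nonneg (α := ℝ)]
    exact mul_le_mul hkn (hB k (by omega)) (abs_nonneg _) n.cast_nonneg
  have hnorm := abs_norm_aeval_le hθ hB
    (natDegree_natDegree_mul_sub_X_mul_derivative_le hnext) hcoeff
  calc |(discr K : ℝ)| * |((minpoly ℤ θ).coeff 0 : ℝ)|
      ≤ |(Algebra.norm ℤ (aeval θ g) : ℝ)| := by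
        have := abs_norm_aeval_mul_abs_coeff_zero hθ
        exact_mod_cast (mul_le_mul_of_nonneg_right
          (abs_discr_le_abs_norm_aeval_derivative_minpoly hθ) (abs_nonneg _)).trans_eq this
    _ ≤ (((n - 2 : ℕ) + 1) * (n * B)) ^ n * ((n + 1) * B) ^ (n - 2) := hnorm
    _ ≤ ((n + 1) ^ 2 * B) ^ n * ((n + 1) ^ 2 * B) ^ (n - 2) := by
        have hn2 : ((n - 2 : ℕ) : ℝ) ≤ n := by exact_mod_cast n.sub_le 2
        have hfst : ((n - 2 : ℕ) + 1) * (n * B) ≤ (n + 1) ^ 2 * B := by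
          calc ((n - 2 : ℕ) + 1) * (n * B) ≤ (n + 1) * ((n + 1) * B) := by gcongr; linarith
            _ = (n + 1) ^ 2 * B := by ring
        gcongr
        exact le_self_pow₀ (by linarith) two_ne_zero
    _ = ((n + 1) ^ 2 * B) ^ (2 * (n - 1)) := by
        rw [← pow_add]
        congr 1
        omega

end DiscriminantBound

section InterpolationFamily

open Polynomial Finset Lagrange

variable {ι R S : Type*} [Fintype ι] [DecidableEq ι] [CommRing R] [CommRing S]

/-- The nodal polynomial `∏ (X - a k)` of all nodes other than `a j`. -/
noncomputable def coNodal (a : ι → R) (j : ι) : R[X] := nodal (univ.erase j) a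

/-- The product `∏ (a j - a k)` of the differences of `a j` with the other nodes. -/
def nodeGap (a : ι → R) (j : ι) : R := ∏ k ∈ univ.erase j, (a j - a k)

/-- The integer `u j` whose `l`-th power is the value of `interpolant` at the node `α j ^ l`. -/
def nodeValue (l : ℕ) (α κ : ι → R) (s : R) (j : ι) : R :=
  α j ^ (Fintype.card ι + 1) + κ j * s * nodeGap (α ^ l) j

/-- The quotient of `nodeValue j ^ l - (α j ^ l) ^ n` by `nodeGap j`, where `n` is the degree
`Fintype.card ι + 1` of `interpolant`. It is written as a geometric sum because `nodeGap j` need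
not be invertible. -/
def nodeCoeff (l : ℕ) (α κ : ι → R) (s : R) (j : ι) : R :=
  κ j * s * ∑ k ∈ range l,
    nodeValue l α κ s j ^ k * (α j ^ (Fintype.card ι + 1)) ^ (l - 1 - k)

/-- The monic polynomial of degree `n = Fintype.card ι + 1` with vanishing `X ^ (n - 1)`-coefficient
that takes the value `nodeValue j ^ l` at each of the nodes `α j ^ l`, in Lagrange form. -/
noncomputable def interpolant (l : ℕ) (α κ : ι → R) (s : R) : R[X] :=
  X ^ (Fintype.card ι + 1) + ∑ j, C (nodeCoeff l α κ s j) * coNodal (α ^ l) j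

theorem eval_coNodal_self (a : ι → R) (j : ι) : (coNodal a j).eval (a j) = nodeGap a j :=
  eval_nodal

theorem eval_coNodal_of_ne (a : ι → R) {j k : ι} (h : k ≠ j) : (coNodal a j).eval (a k) = 0 :=
  eval_nodal_at_node (mem_erase.mpr ⟨h, mem_univ k⟩)

theorem natDegree_coNodal [Nontrivial R] (a : ι → R) (j : ι) :
    (coNodal a j).natDegree = Fintype.card ι - 1 := by
  rw [coNodal, natDegree_nodal, card_erase_of_mem (mem_univ j), card_univ]

theorem nodeCoeff_mul_nodeGap (l : ℕ) (α κ : ι → R) (s : R) (j : ι) :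
    nodeCoeff l α κ s j * nodeGap (α ^ l) j =
      nodeValue l α κ s j ^ l - (α j ^ l) ^ (Fintype.card ι + 1) := by
  have hgeom := geom_sum₂_mul (nodeValue l α κ s j) (α j ^ (Fintype.card ι + 1)) l
  have hsub : nodeValue l α κ s j - α j ^ (Fintype.card ι + 1) = κ j * s * nodeGap (α ^ l) j := by
    rw [nodeValue]
    ring
  rw [← pow_mul, mul_comm l, pow_mul, ← hgeom, hsub, nodeCoeff]
  ring

theorem eval_interpolant (l : ℕ) (α κ : ι → R) (s : R) (j : ι) :
    (interpolant l α κ s).eval (α j ^ l) = nodeValue l α κ s j ^ l := by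
  have hself := eval_coNodal_self (α ^ l) j
  have hne : ∀ k ≠ j, (coNodal (α ^ l) k).eval (α j ^ l) = 0 := fun k hk ↦
    eval_coNodal_of_ne (α ^ l) hk.symm
  rw [Pi.pow_apply] at hself
  rw [interpolant, eval_add, eval_finsetSum, sum_eq_single j (by simp +contextual [hne]) (by simp),
    eval_C_mul, hself, nodeCoeff_mul_nodeGap, eval_X_pow]
  ring

theorem map_nodeGap (φ : R →+* S) (a : ι → R) (j : ι) : φ (nodeGap a j) = nodeGap (φ ∘ a) j := by
  simp [nodeGap]

theorem map_coNodal (φ : R →+* S) (a : ι → R) (j : ι) :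
    (coNodal a j).map φ = coNodal (φ ∘ a) j := by
  simp [coNodal, nodal, Polynomial.map_prod]

theorem map_nodeValue (φ : R →+* S) (l : ℕ) (α κ : ι → R) (s : R) (j : ι) :
    φ (nodeValue l α κ s j) = nodeValue l (φ ∘ α) (φ ∘ κ) (φ s) j := by
  simp [nodeValue, map_nodeGap]

theorem map_nodeCoeff (φ : R →+* S) (l : ℕ) (α κ : ι → R) (s : R) (j : ι) :
    φ (nodeCoeff l α κ s j) = nodeCoeff l (φ ∘ α) (φ ∘ κ) (φ s) j := by
  simp [nodeCoeff, map_nodeValue]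

theorem map_interpolant (φ : R →+* S) (l : ℕ) (α κ : ι → R) (s : R) :
    (interpolant l α κ s).map φ = interpolant l (φ ∘ α) (φ ∘ κ) (φ s) := by
  simp only [interpolant, Polynomial.map_add, Polynomial.map_sum, Polynomial.map_mul,
    Polynomial.map_pow, map_X, map_C, map_coNodal, map_nodeCoeff φ, map_comp_pow]

theorem map_eval_derivative_interpolant (φ : R →+* S) (l : ℕ) (α κ : ι → R) (s x : R) :
    φ ((interpolant l α κ s).derivative.eval x) =
      (interpolant l (φ ∘ α) (φ ∘ κ) (φ s)).derivative.eval (φ x) := by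
  rw [← map_interpolant, derivative_map, eval_map_apply]

theorem eval_derivative_interpolant (l : ℕ) (α κ : ι → R) (s x : R) :
    (interpolant l α κ s).derivative.eval x = (Fintype.card ι + 1 : ℕ) * x ^ Fintype.card ι +
      ∑ j, nodeCoeff l α κ s j * (coNodal (α ^ l) j).derivative.eval x := by
  simp [interpolant, eval_finsetSum]

theorem coeff_interpolant (l : ℕ) (α κ : ι → R) (s : R) {m : ℕ} (hm : m ≤ Fintype.card ι) :
    (interpolant l α κ s).coeff m = ∑ j, nodeCoeff l α κ s j * (coNodal (α ^ l) j).coeff m := by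
  simp [interpolant, coeff_X_pow, (Nat.lt_succ_of_le hm).ne]

section Nontrivial

variable [Nontrivial R]

theorem degree_sum_nodeCoeff_mul_coNodal_lt (l : ℕ) (α κ : ι → R) (s : R) :
    (∑ j, C (nodeCoeff l α κ s j) * coNodal (α ^ l) j).degree < (Fintype.card ι + 1 : ℕ) := by
  refine (degree_sum_le _ _).trans_lt ((Finset.sup_lt_iff (WithBot.bot_lt_coe _)).mpr fun j _ ↦ ?_)
  have hdeg : (C (nodeCoeff l α κ s j) * coNodal (α ^ l) j).natDegree ≤ Fintype.card ι :=
    (natDegree_C_mul_le _ _).trans ((natDegree_coNodal _ j).trans_le (Nat.sub_le _ _))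
  exact (degree_le_of_natDegree_le hdeg).trans_lt (by exact_mod_cast Nat.lt_succ_self _)

theorem monic_interpolant (l : ℕ) (α κ : ι → R) (s : R) : (interpolant l α κ s).Monic :=
  monic_X_pow_add (degree_sum_nodeCoeff_mul_coNodal_lt l α κ s)

theorem natDegree_interpolant (l : ℕ) (α κ : ι → R) (s : R) :
    (interpolant l α κ s).natDegree = Fintype.card ι + 1 := by
  rw [interpolant, natDegree_add_eq_left_of_degree_lt, natDegree_X_pow]
  rw [degree_X_pow]
  exact degree_sum_nodeCoeff_mul_coNodal_lt l α κ s

theorem coeff_card_interpolant [Nonempty ι] (l : ℕ) (α κ : ι → R) (s : R) :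
    (interpolant l α κ s).coeff (Fintype.card ι) = 0 := by
  rw [coeff_interpolant l α κ s le_rfl]
  refine sum_eq_zero fun j _ ↦ ?_
  have hcard : 0 < Fintype.card ι := Fintype.card_pos
  rw [coeff_eq_zero_of_natDegree_lt (by rw [natDegree_coNodal]; omega), mul_zero]

theorem coeff_card_sub_one_interpolant (l : ℕ) (α κ : ι → R) (s : R) :
    (interpolant l α κ s).coeff (Fintype.card ι - 1) = ∑ j, nodeCoeff l α κ s j := by
  rw [coeff_interpolant l α κ s (Nat.sub_le _ _)]
  refine sum_congr rfl fun j _ ↦ ?_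
  rw [← natDegree_coNodal (α ^ l) j, coNodal, nodal_monic.coeff_natDegree, mul_one]

end Nontrivial

end InterpolationFamily

section LocalParameters

open Polynomial Finset

/-- The local conditions imposed on the family at an auxiliary prime: `x` is a simple root of the
reduction, and no node `α j ^ l` is a multiple root of the reduction. -/
structure IsGoodRoot {ι F : Type*} [Fintype ι] [DecidableEq ι] [CommRing F] (l : ℕ) (α κ : ι → F)
    (s x : F) : Prop where
  eval_eq_zero : (interpolant l α κ s).eval x = 0
  derivative_ne_zero : (interpolant l α κ s).derivative.eval x ≠ 0
  nodes_not_multiple_root : ∀ j,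
    nodeValue l α κ s j ≠ 0 ∨ (interpolant l α κ s).derivative.eval (α j ^ l) ≠ 0

variable {ι F : Type*} [Fintype ι] [DecidableEq ι] [Field F] {l : ℕ} {i k : ι}

/-- The residues of the bases `α` at the auxiliary primes attached to `i`: zero at `i` and one
elsewhere. -/
def puncturedOne (i : ι) : ι → F := Function.update 1 i 0

omit [Fintype ι] in
@[simp] theorem puncturedOne_self (i : ι) : (puncturedOne i : ι → F) i = 0 :=
  Function.update_self ..

omit [Fintype ι] in
@[simp] theorem puncturedOne_of_ne (hk : k ≠ i) : (puncturedOne i : ι → F) k = 1 :=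
  Function.update_of_ne hk ..

omit [Fintype ι] in
theorem puncturedOne_pow (hl : l ≠ 0) (i : ι) : (puncturedOne i : ι → F) ^ l = puncturedOne i := by
  ext j
  obtain rfl | hj := eq_or_ne j i
  · simp [hl]
  · simp [hj]

theorem coNodal_puncturedOne (hk : k ≠ i) :
    coNodal (puncturedOne i : ι → F) k = X * (X - 1) ^ (Fintype.card ι - 2) := by
  have hi : i ∈ univ.erase k := mem_erase.mpr ⟨hk.symm, mem_univ i⟩
  have hrest : ∀ j ∈ (univ.erase k).erase i, X - C (puncturedOne i j : F) = X - 1 := by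
    intro j hj
    rw [puncturedOne_of_ne (ne_of_mem_erase hj), C_1]
  rw [coNodal, Lagrange.nodal, ← mul_prod_erase _ _ hi, prod_congr rfl hrest, prod_const,
    card_erase_of_mem hi, card_erase_of_mem (mem_univ k), card_univ]
  simp [Nat.sub_sub]

theorem nodeGap_puncturedOne (hcard : 3 ≤ Fintype.card ι) (hk : k ≠ i) :
    nodeGap (puncturedOne i : ι → F) k = 0 := by
  rw [← eval_coNodal_self, coNodal_puncturedOne hk]
  simp [hk, show Fintype.card ι - 2 ≠ 0 by omega]

theorem nodeValue_puncturedOne (hcard : 3 ≤ Fintype.card ι) (hl : l ≠ 0) (κ : ι → F) (s : F)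
    (hk : k ≠ i) : nodeValue l (puncturedOne i) κ s k = 1 := by
  simp [nodeValue, puncturedOne_pow hl, nodeGap_puncturedOne hcard hk, hk]

theorem interpolant_puncturedOne_single (hcard : 3 ≤ Fintype.card ι) (hl : l ≠ 0) (hk : k ≠ i)
    (s : F) : interpolant l (puncturedOne i) (Pi.single k 1) s =
      X ^ (Fintype.card ι + 1) + C (l * s) * (X * (X - 1) ^ (Fintype.card ι - 2)) := by
  have hcoeff : nodeCoeff l (puncturedOne i) (Pi.single k 1) s k = l * s := by
    simp [nodeCoeff, nodeValue_puncturedOne hcard hl _ _ hk, hk, mul_comm]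
  have hcoeff_ne : ∀ j ≠ k, nodeCoeff l (puncturedOne i) (Pi.single k 1) s j = 0 := by
    intro j hj
    simp [nodeCoeff, hj]
  rw [interpolant, sum_eq_single k (by simp +contextual [hcoeff_ne]) (by simp), hcoeff,
    puncturedOne_pow hl, coNodal_puncturedOne hk]

omit [Fintype ι] [DecidableEq ι] in
theorem eval_derivative_X_pow_add_C_mul (m : ℕ) (S y : F) :
    (X ^ (m + 4) + C S * (X * (X - 1) ^ (m + 1)) : F[X]).derivative.eval y =
      (m + 4) * y ^ (m + 3) + S * ((y - 1) ^ (m + 1) + y * ((m + 1) * (y - 1) ^ m)) := by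
  simp [derivative_pow]

theorem exists_isGoodRoot_of_three_le_card (hcard : 3 ≤ Fintype.card ι) (hl : (l : F) ≠ 0) (i : ι)
    {x : F} (hx₀ : x ≠ 0) (hx₁ : x - 1 ≠ 0) (hx₂ : 2 * x ≠ Fintype.card ι) :
    ∃ (κ : ι → F) (s : F), IsGoodRoot l (puncturedOne i) κ s x := by
  have hl' : l ≠ 0 := fun h ↦ hl (by rw [h, Nat.cast_zero])
  have := Fintype.one_lt_card_iff_nontrivial.mp (show 1 < Fintype.card ι by omega)
  obtain ⟨k, hk⟩ := exists_ne i
  obtain ⟨m, hm⟩ : ∃ m, Fintype.card ι = m + 3 := Nat.exists_eq_add_of_le' hcard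
  set S : F := -x ^ (m + 3) / (x - 1) ^ (m + 1)
  have hS : S * (x - 1) ^ (m + 1) = -x ^ (m + 3) := div_mul_cancel₀ _ (pow_ne_zero _ hx₁)
  have hf : interpolant l (puncturedOne i) (Pi.single k 1) (S / l) =
      X ^ (m + 4) + C S * (X * (X - 1) ^ (m + 1)) := by
    rw [interpolant_puncturedOne_single hcard hl' hk, mul_div_cancel₀ _ hl, hm]
    rfl
  refine ⟨Pi.single k 1, S / l, ?_, fun h ↦ ?_, fun j ↦ ?_⟩
  · rw [hf]
    simp only [eval_add, eval_mul, eval_pow, eval_X, eval_C, eval_sub, eval_one]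
    linear_combination x * hS
  · rw [hf, eval_derivative_X_pow_add_C_mul] at h
    have hmul : x ^ (m + 3) * (2 * x - (m + 3 : ℕ)) = 0 := by
      push_cast
      linear_combination (x - 1) * h - (x - 1) * hS - x * (m + 1) * hS
    rw [hm] at hx₂
    exact mul_ne_zero (pow_ne_zero _ hx₀) (sub_ne_zero.mpr hx₂) hmul
  · obtain rfl | hj := eq_or_ne j i
    · have hS₀ : S ≠ 0 := div_ne_zero (neg_ne_zero.mpr (pow_ne_zero _ hx₀)) (pow_ne_zero _ hx₁)
      right
      simp [hf, hl', hS₀]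
    · left
      simp [nodeValue_puncturedOne hcard hl' _ _ hj]

section CardEqTwo

variable (hcard : Fintype.card ι = 2) (hk : k ≠ i)

include hcard hk

theorem univ_eq_pair_of_card_eq_two : (univ : Finset ι) = {i, k} :=
  (eq_univ_of_card _ (by rw [hcard, card_pair hk.symm])).symm

theorem coNodal_puncturedOne_self_of_card_eq_two : coNodal (puncturedOne i : ι → F) i = X - 1 := by
  have herase : univ.erase i = {k} := by
    rw [univ_eq_pair_of_card_eq_two hcard hk, erase_insert (by simpa using hk.symm)]
  simp [coNodal, Lagrange.nodal, herase, hk]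

theorem nodeGap_puncturedOne_self_of_card_eq_two : nodeGap (puncturedOne i : ι → F) i = -1 := by
  simp [← eval_coNodal_self, coNodal_puncturedOne_self_of_card_eq_two hcard hk]

theorem nodeGap_puncturedOne_of_card_eq_two : nodeGap (puncturedOne i : ι → F) k = 1 := by
  simp [← eval_coNodal_self, coNodal_puncturedOne hk, hcard, hk]

theorem interpolant_puncturedOne_of_card_eq_two (hl : l ≠ 0) (κ : ι → F) (s : F) :
    interpolant l (puncturedOne i) κ s =
      X ^ 3 + (C (-nodeValue l (puncturedOne i) κ s i ^ l) * (X - 1) +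
        C (nodeValue l (puncturedOne i) κ s k ^ l - 1) * X) := by
  have hcoeff_i := nodeCoeff_mul_nodeGap l (puncturedOne i) κ s i
  have hcoeff_k := nodeCoeff_mul_nodeGap l (puncturedOne i) κ s k
  simp only [puncturedOne_pow hl, nodeGap_puncturedOne_self_of_card_eq_two hcard hk,
    nodeGap_puncturedOne_of_card_eq_two hcard hk, puncturedOne_self, puncturedOne_of_ne hk,
    zero_pow hl, zero_pow (Nat.succ_ne_zero _), one_pow, mul_neg, mul_one, sub_zero]
    at hcoeff_i hcoeff_k
  rw [interpolant, univ_eq_pair_of_card_eq_two hcard hk, sum_pair hk.symm, puncturedOne_pow hl,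
    coNodal_puncturedOne_self_of_card_eq_two hcard hk, coNodal_puncturedOne hk, hcoeff_k,
    ← hcoeff_i, hcard]
  simp

end CardEqTwo

theorem exists_isGoodRoot_of_card_eq_two (hcard : Fintype.card ι = 2) (hl : l ≠ 0) (i : ι)
    {x u v : F} (hu : u ≠ 0) (hv : v ≠ 0)
    (huv : (1 - x) * u ^ l + x * v ^ l = x * (1 - x ^ 2)) (hux : u ^ l ≠ 2 * x ^ 3) :
    ∃ (κ : ι → F) (s : F), IsGoodRoot l (puncturedOne i) κ s x := by
  have := Fintype.one_lt_card_iff_nontrivial.mp (show 1 < Fintype.card ι by omega)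
  obtain ⟨k, hk⟩ := exists_ne i
  set κ : ι → F := Function.update (fun _ ↦ v - 1) i (-u) with hκ
  have hval_i : nodeValue l (puncturedOne i) κ 1 i = u := by
    simp [nodeValue, puncturedOne_pow hl, nodeGap_puncturedOne_self_of_card_eq_two hcard hk, hκ]
  have hval : ∀ j ≠ i, nodeValue l (puncturedOne i) κ 1 j = v := by
    intro j hj
    simp [nodeValue, puncturedOne_pow hl, nodeGap_puncturedOne_of_card_eq_two hcard hj, hκ, hj]
  have hf := interpolant_puncturedOne_of_card_eq_two hcard hk hl κ 1
  rw [hval_i, hval k hk] at hf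
  refine ⟨κ, 1, ?_, fun h ↦ hux ?_, fun j ↦ .inl ?_⟩
  · rw [hf]
    simp only [eval_add, eval_mul, eval_pow, eval_X, eval_C, eval_sub, eval_one]
    linear_combination huv
  · simp only [hf, derivative_add, derivative_C_mul, derivative_X_pow, derivative_sub, derivative_X,
      derivative_one, eval_add, eval_mul, eval_pow, eval_X, eval_C, eval_sub, eval_one] at h
    norm_num at h
    linear_combination -x * h + huv
  · obtain rfl | hj := eq_or_ne j i
    · rwa [hval_i]
    · rwa [hval j hj]

section FiniteField

variable [Fintype F] {p : ℕ}

omit [Fintype ι] [DecidableEq ι] in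
theorem exists_not_pow_of_dvd_card_sub_one (hp : p.Prime) (hdvd : p ∣ Fintype.card F - 1) :
    ∃ t : F, ¬∃ r, r ^ p = t := by
  classical
  by_contra! hsurj
  have hinj : Function.Injective fun r : F ↦ r ^ p := Finite.injective_iff_surjective.mpr hsurj
  have : Fact p.Prime := ⟨hp⟩
  obtain ⟨ζ, hζ⟩ := exists_prime_orderOf_dvd_card (G := Fˣ) p (by rwa [Fintype.card_units])
  have hone : (ζ : F) = 1 := hinj (by
    change (ζ : F) ^ p = 1 ^ p
    rw [one_pow, ← Units.val_pow_eq_pow_val, ← hζ, pow_orderOf_eq_one, Units.val_one])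
  rw [Units.val_eq_one.mp hone, orderOf_one] at hζ
  exact hp.one_lt.ne hζ

omit [Fintype ι] [DecidableEq ι] in
theorem exists_not_pow_of_sub_one_eq_pow (hp : p.Prime) (hdvd : p ∣ Fintype.card F - 1)
    (E : Finset F) (hcard : (p + (#E + 4) * p ^ 2) ^ 2 < Fintype.card F) :
    ∃ x ∉ E, x - 1 ≠ 0 ∧ (¬∃ r, r ^ p = x) ∧ ∃ r, r ^ p = x - 1 := by
  classical
  obtain ⟨t, ht⟩ := exists_not_pow_of_dvd_card_sub_one hp hdvd
  have ht₀ : t ≠ 0 := fun h ↦ ht ⟨0, by rw [h, zero_pow hp.ne_zero]⟩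
  have hcardE : #((insert 0 (insert 1 E)).image (· / t)) ≤ #E + 2 :=
    card_image_le.trans ((card_insert_le _ _).trans (Nat.succ_le_succ (card_insert_le _ _)))
  obtain ⟨r, s, hrs, hr⟩ := exists_pow_add_pow_eq_of_card_lt hp.pos ht₀
    (neg_ne_zero.mpr one_ne_zero) one_ne_zero ((insert 0 (insert 1 E)).image (· / t))
    (lt_of_le_of_lt (by grw [hcardE]) hcard)
  have hx : t * r ^ p ∉ insert 0 (insert 1 E) := fun h ↦
    hr (mem_image.mpr ⟨_, h, mul_div_cancel_left₀ _ ht₀⟩)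
  simp only [mem_insert, not_or] at hx
  refine ⟨t * r ^ p, hx.2.2, sub_ne_zero.mpr hx.2.1, fun ⟨y, hy⟩ ↦ ht ⟨y / r, ?_⟩, s, ?_⟩
  · rw [div_pow, hy, mul_div_cancel_right₀ _ (right_ne_zero_of_mul hx.1)]
  · linear_combination -hrs

theorem exists_isGoodRoot_isUniqueNonPower (hι : 2 ≤ Fintype.card ι) (h₂ : (2 : F) ≠ 0)
    (hl : (l : F) ≠ 0) (hp : p.Prime) (hdvd : p ∣ Fintype.card F - 1)
    (hcardp : (p + 6 * p ^ 2) ^ 2 < Fintype.card F) (hcardl : (l + 6 * l ^ 2) ^ 2 < Fintype.card F)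
    (i : ι) : ∃ (κ : ι → F) (s x : F), IsGoodRoot l (puncturedOne i) κ s x ∧
      IsUniqueNonPower p (fun j ↦ x - puncturedOne i j) i := by
  classical
  obtain ⟨x, hxE, hx₁, hx_not_pow, hx_pow⟩ := exists_not_pow_of_sub_one_eq_pow hp hdvd
    {-1, (Fintype.card ι : F) / 2} (lt_of_le_of_lt (by grw [card_le_two]) hcardp)
  simp only [mem_insert, mem_singleton, not_or] at hxE
  have hx₀ : x ≠ 0 := fun h ↦ hx_not_pow ⟨0, by rw [h, zero_pow hp.ne_zero]⟩
  have hunique : IsUniqueNonPower p (fun j ↦ x - puncturedOne i j) i := by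
    refine ⟨fun j ↦ ?_, by simpa using hx_not_pow, fun j hj ↦ by simpa [hj] using hx_pow⟩
    obtain rfl | hj := eq_or_ne j i
    · simpa using hx₀
    · simpa [hj] using hx₁
  suffices hgood : ∃ (κ : ι → F) (s : F), IsGoodRoot l (puncturedOne i) κ s x by
    obtain ⟨κ, s, h⟩ := hgood
    exact ⟨κ, s, x, h, hunique⟩
  obtain hι | hι := hι.eq_or_lt
  · have hl' : l ≠ 0 := fun h ↦ hl (by rw [h, Nat.cast_zero])
    have hx₁' : 1 - x ≠ 0 := by rwa [← neg_sub, neg_ne_zero]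
    have hrhs : x * (1 - x ^ 2) ≠ 0 := by
      rw [show x * (1 - x ^ 2) = x * ((1 - x) * (x - -1)) by ring]
      exact mul_ne_zero hx₀ (mul_ne_zero hx₁' (sub_ne_zero.mpr hxE.1))
    obtain ⟨u, v, huv, hu⟩ := exists_pow_add_pow_eq_of_card_lt (Nat.pos_of_ne_zero hl') hx₁' hx₀
      hrhs {0, 2 * x ^ 3, x * (1 - x ^ 2) / (1 - x)}
      (lt_of_le_of_lt (by grw [card_le_three]; gcongr; norm_num) hcardl)
    simp only [mem_insert, mem_singleton, not_or] at hu
    refine exists_isGoodRoot_of_card_eq_two hι.symm hl' i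
      (fun hu₀ ↦ hu.1 (by rw [hu₀, zero_pow hl'])) (fun hv ↦ hu.2.2 ?_) huv hu.2.1
    rw [eq_div_iff hx₁', ← huv, hv, zero_pow hl']
    ring
  · refine exists_isGoodRoot_of_three_le_card hι hl i hx₀ hx₁ fun h ↦ hxE.2 ?_
    rw [eq_div_iff h₂, mul_comm, h]

end FiniteField

end LocalParameters

section Weights

open Polynomial Finset Lagrange Filter Function Topology

theorem exists_ne_zero_forall_dvd_of_aeval_ne_zero {R K : Type*} [CommRing R] [Field K]
    [Algebra R K] (h : R[X]) {a b : R} (hb : algebraMap R K b ≠ 0)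
    (hroot : aeval (-algebraMap R K a / algebraMap R K b) h ≠ 0) :
    ∃ e : R, e ≠ 0 ∧ ∀ s d, d ∣ a + b * s → d ∣ h.eval s → d ∣ e := by
  refine ⟨(scaleRoots h b).eval (-a), fun hzero ↦ hroot ?_, fun s d hlin hd ↦ ?_⟩
  · have hscale := scaleRoots_eval₂_mul (p := h) (algebraMap R K)
      (-algebraMap R K a / algebraMap R K b) b
    rw [mul_div_cancel₀ _ hb, ← map_neg, eval₂_hom, hzero, map_zero] at hscale
    simpa [aeval_def] using (mul_eq_zero.mp hscale.symm).resolve_left (pow_ne_zero _ hb)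
  · have hscale := scaleRoots_eval₂_mul (p := h) (RingHom.id R) s b
    rw [RingHom.id_apply, ← Polynomial.eval, ← Polynomial.eval] at hscale
    have hdiff := sub_dvd_eval_sub (b * s) (-a) (scaleRoots h b)
    rw [hscale, sub_neg_eq_add, add_comm] at hdiff
    exact (dvd_sub_right (hd.mul_left _)).mp (hlin.trans hdiff)

theorem eventually_add_mul_pow_ne {b c : ℝ} (hc : c ≠ 0) (d : ℝ) {l : ℕ} (hl : l ≠ 0) :
    ∀ᶠ x : ℝ in atTop, (b + c * x) ^ l ≠ d := by
  have hlin : Tendsto (fun x ↦ |c| * x - |b|) atTop atTop :=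
    tendsto_atTop_add_const_right _ _ (tendsto_id.const_mul_atTop (abs_pos.mpr hc))
  filter_upwards [hlin.eventually_gt_atTop (|d| + 1), eventually_ge_atTop 0] with x hx hx₀ heq
  have hlower : |c| * x - |b| ≤ |b + c * x| := by
    have := abs_sub_abs_le_abs_sub (c * x) (-b)
    rwa [abs_neg, abs_mul, abs_of_nonneg hx₀, sub_neg_eq_add, add_comm] at this
  have hpow : |b + c * x| ≤ |b + c * x| ^ l :=
    le_self_pow₀ (by linarith [abs_nonneg d]) hl
  rw [← abs_pow, heq] at hpow
  linarith

variable {ι R : Type*} [Fintype ι] [DecidableEq ι] [CommRing R]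

theorem nodeGap_ne_zero [IsDomain R] {a : ι → R} (ha : Injective a) (j : ι) : nodeGap a j ≠ 0 :=
  prod_ne_zero_iff.mpr fun _ hk ↦ sub_ne_zero.mpr (ha.ne (ne_of_mem_erase hk).symm)

theorem eval_derivative_coNodal (a : ι → R) {j k : ι} (h : j ≠ k) :
    (coNodal a k).derivative.eval (a j) = ∏ i ∈ (univ.erase k).erase j, (a j - a i) := by
  rw [coNodal, eval_nodal_derivative_eval_node_eq (mem_erase.mpr ⟨h, mem_univ j⟩), eval_nodal]

theorem nodeCoeff_update_of_ne (l : ℕ) (α κ : ι → R) (x s : R) {j m : ι} (h : j ≠ m) :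
    nodeCoeff l α (update κ m x) s j = nodeCoeff l α κ s j := by
  simp only [nodeCoeff, nodeValue, update_of_ne h]

/-- The coefficient of `s` in `nodeCoeff l α κ s j`, viewed as a polynomial in `s`. -/
def nodeSlope (l : ℕ) (α κ : ι → R) (j : ι) : R :=
  l * κ j * (α j ^ (Fintype.card ι + 1)) ^ (l - 1)

omit [DecidableEq ι] in
theorem nodeSlope_pos {l : ℕ} (hl : l ≠ 0) [LinearOrder R] [IsStrictOrderedRing R] {α κ : ι → R}
    (hα : ∀ j, 0 < α j) (hκ : ∀ j, 0 < κ j) (j : ι) : 0 < nodeSlope l α κ j := by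
  have := hα j
  have := hκ j
  have : (0 : R) < l := Nat.cast_pos.mpr (Nat.pos_of_ne_zero hl)
  rw [nodeSlope]
  positivity

theorem hasDerivAt_nodeCoeff_zero (l : ℕ) (α κ : ι → ℝ) (j : ι) :
    HasDerivAt (nodeCoeff l α κ · j) (nodeSlope l α κ j) 0 := by
  have hsum : Differentiable ℝ fun s ↦ ∑ k ∈ range l,
      nodeValue l α κ s j ^ k * (α j ^ (Fintype.card ι + 1)) ^ (l - 1 - k) := by
    unfold nodeValue
    fun_prop
  have hzero : ∀ k ∈ range l, nodeValue l α κ 0 j ^ k *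
      (α j ^ (Fintype.card ι + 1)) ^ (l - 1 - k) = (α j ^ (Fintype.card ι + 1)) ^ (l - 1) := by
    intro k hk
    rw [nodeValue, mul_zero, zero_mul, add_zero, ← pow_add,
      Nat.add_sub_of_le (Nat.le_sub_one_of_lt (mem_range.mp hk))]
  refine (((hasDerivAt_id (0 : ℝ)).const_mul (κ j)).mul (hsum 0).hasDerivAt).congr_deriv ?_
  rw [sum_congr rfl hzero, sum_const, card_range, nodeSlope, id, nsmul_eq_mul]
  ring

section CriticalParameter

variable {K : Type*} [Field K]

/-- The parameter `s` at which `nodeValue l α κ s j` vanishes. -/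
def criticalParameter (l : ℕ) (α κ : ι → K) (j : ι) : K :=
  -α j ^ (Fintype.card ι + 1) / (κ j * nodeGap (α ^ l) j)

theorem nodeValue_criticalParameter {l : ℕ} {α κ : ι → K} (hα : Injective (α ^ l)) {j : ι}
    (hκ : κ j ≠ 0) : nodeValue l α κ (criticalParameter l α κ j) j = 0 := by
  have := nodeGap_ne_zero hα j
  rw [nodeValue, criticalParameter]
  field_simp
  ring

theorem nodeCoeff_criticalParameter {l : ℕ} (hl : l ≠ 0) {α κ : ι → K} (hα : Injective (α ^ l))
    {j : ι} (hκ : κ j ≠ 0) : nodeCoeff l α κ (criticalParameter l α κ j) j =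
      -(α j ^ l) ^ (Fintype.card ι + 1) / nodeGap (α ^ l) j := by
  rw [eq_div_iff (nodeGap_ne_zero hα j), nodeCoeff_mul_nodeGap, nodeValue_criticalParameter hα hκ,
    zero_pow hl, zero_sub]

end CriticalParameter

variable {l : ℕ} {m : ι}

/-- When the weight `x` of the largest node tends to infinity, its critical parameter `s` tends to
`0`, and the derivative is a function of `s` alone whose derivative at `s = 0` is positive. -/
theorem eventually_eval_derivative_criticalParameter_self_ne_zero [Nontrivial ι] (hl : l ≠ 0)
    {α κ : ι → ℝ} (hα : ∀ j, 0 < α j) (hκ : ∀ j, 0 < κ j) (hinj : Injective (α ^ l))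
    (hmax : ∀ j, (α ^ l) j ≤ (α ^ l) m) :
    ∀ᶠ x in atTop, (interpolant l α (update κ m x)
      (criticalParameter l α (update κ m x) m)).derivative.eval (α m ^ l) ≠ 0 := by
  set L := fun j ↦ (coNodal (α ^ l) j).derivative.eval (α m ^ l)
  have hL : ∀ j ∈ univ.erase m, 0 < L j := fun j hj ↦ by
    have := eval_derivative_coNodal (α ^ l) (ne_of_mem_erase hj).symm
    rw [Pi.pow_apply] at this
    rw [show L j = _ from this]
    exact prod_pos fun k hk ↦ sub_pos.mpr ((hmax k).lt_of_ne (hinj.ne (ne_of_mem_erase hk)))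
  set g : ℝ → ℝ := fun s ↦ ∑ j ∈ univ.erase m, nodeCoeff l α κ s j * L j
  have hg : HasDerivAt g (∑ j ∈ univ.erase m, nodeSlope l α κ j * L j) 0 :=
    .fun_sum fun j _ ↦ (hasDerivAt_nodeCoeff_zero l α κ j).mul_const _
  have hg' : 0 < ∑ j ∈ univ.erase m, nodeSlope l α κ j * L j :=
    sum_pos (fun j hj ↦ mul_pos (nodeSlope_pos hl hα hκ j) (hL j hj))
      ((exists_ne m).imp fun j hj ↦ mem_erase.mpr ⟨hj, mem_univ j⟩)
  have hgap := nodeGap_ne_zero hinj m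
  have hcrit : Tendsto (fun x ↦ criticalParameter l α (update κ m x) m) atTop (𝓝[≠] 0) := by
    simp only [criticalParameter, update_self]
    refine tendsto_nhdsWithin_iff.mpr ⟨?_, ?_⟩
    · convert tendsto_id.const_div_atTop (-α m ^ (Fintype.card ι + 1) / nodeGap (α ^ l) m) using 2
      rw [id, div_div, mul_comm]
    · filter_upwards [eventually_ne_atTop 0] with x hx
      exact div_ne_zero (neg_ne_zero.mpr (pow_ne_zero _ (hα m).ne')) (mul_ne_zero hx hgap)
  set c := (Fintype.card ι + 1 : ℕ) * (α m ^ l) ^ Fintype.card ι +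
    -(α m ^ l) ^ (Fintype.card ι + 1) / nodeGap (α ^ l) m * L m
  filter_upwards [hcrit.eventually (hg.eventually_ne hg'.ne' (c := -c)), eventually_ne_atTop 0]
    with x hx hx₀ hzero
  refine hx (eq_neg_of_add_eq_zero_right (hzero ▸ ?_))
  rw [eval_derivative_interpolant, ← add_sum_erase _ _ (mem_univ m),
    nodeCoeff_criticalParameter hl hinj (by rwa [update_self]), ← add_assoc]
  exact congrArg _ (sum_congr rfl fun j hj ↦ by
    rw [nodeCoeff_update_of_ne _ _ _ _ _ (ne_of_mem_erase hj)])

theorem eventually_eval_derivative_criticalParameter_ne_zero (hl : l ≠ 0) {α κ : ι → ℝ} {j : ι}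
    (hα : α j ≠ 0) (hκ : κ j ≠ 0) (hinj : Injective (α ^ l)) (hj : j ≠ m) :
    ∀ᶠ x in atTop, (interpolant l α (update κ m x)
      (criticalParameter l α (update κ m x) j)).derivative.eval (α j ^ l) ≠ 0 := by
  set L := fun k ↦ (coNodal (α ^ l) k).derivative.eval (α j ^ l)
  have hL : L m ≠ 0 := by
    have := eval_derivative_coNodal (α ^ l) hj
    rw [Pi.pow_apply] at this
    rw [show L m = _ from this]
    exact prod_ne_zero_iff.mpr fun k hk ↦ sub_ne_zero.mpr (hinj.ne (ne_of_mem_erase hk).symm)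
  set s := criticalParameter l α κ j
  have hs : s ≠ 0 := div_ne_zero (neg_ne_zero.mpr (pow_ne_zero _ hα))
    (mul_ne_zero hκ (nodeGap_ne_zero hinj j))
  have hcrit (x : ℝ) : criticalParameter l α (update κ m x) j = s := by
    simp only [s, criticalParameter, update_of_ne hj]
  set c := (Fintype.card ι + 1 : ℕ) * (α j ^ l) ^ Fintype.card ι +
    ∑ k ∈ univ.erase m, nodeCoeff l α κ s k * L k
  filter_upwards [eventually_add_mul_pow_ne (b := α m ^ (Fintype.card ι + 1))
    (mul_ne_zero hs (nodeGap_ne_zero hinj m))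
    (-c / L m * nodeGap (α ^ l) m + (α m ^ l) ^ (Fintype.card ι + 1)) hl] with x hx hzero
  have hcoeff : nodeCoeff l α (update κ m x) s m = -c / L m := by
    rw [eval_derivative_interpolant, ← sum_erase_add _ _ (mem_univ m), hcrit, ← add_assoc,
      sum_congr rfl fun k hk ↦ by rw [nodeCoeff_update_of_ne _ _ _ _ _ (ne_of_mem_erase hk)]]
      at hzero
    rw [eq_div_iff hL]
    linear_combination hzero
  have hvalue := nodeCoeff_mul_nodeGap l α (update κ m x) s m
  rw [hcoeff, nodeValue, update_self] at hvalue
  refine hx ?_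
  rw [hvalue]
  ring

theorem eventually_forall_eval_derivative_criticalParameter_ne_zero [Nontrivial ι] (hl : l ≠ 0)
    {α κ : ι → ℝ} (hα : ∀ j, 0 < α j) (hκ : ∀ j, 0 < κ j) (hinj : Injective (α ^ l))
    (hmax : ∀ j, (α ^ l) j ≤ (α ^ l) m) :
    ∀ᶠ x in atTop, ∀ j, (interpolant l α (update κ m x)
      (criticalParameter l α (update κ m x) j)).derivative.eval (α j ^ l) ≠ 0 := by
  refine eventually_all.mpr fun j ↦ ?_
  obtain rfl | hj := eq_or_ne j m
  · exact eventually_eval_derivative_criticalParameter_self_ne_zero hl hα hκ hinj hmax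
  · exact eventually_eval_derivative_criticalParameter_ne_zero hl (hα j).ne' (hκ j).ne' hinj hj

theorem exists_abs_nodeCoeff_le (hl : l ≠ 0) (α κ : ι → ℤ) :
    ∃ B, ∀ s ≥ 1, ∀ j, |nodeCoeff l α κ s j| ≤ B * s ^ l := by
  set b := fun j ↦ |α j ^ (Fintype.card ι + 1)| + |κ j * nodeGap (α ^ l) j|
  have hle (s : ℤ) (hs : 1 ≤ s) (j : ι) :
      |nodeCoeff l α κ s j| ≤ |κ j| * l * b j ^ (l - 1) * s ^ l := by
    have hbase : |α j ^ (Fintype.card ι + 1)| ≤ b j * s :=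
      (le_add_of_nonneg_right (abs_nonneg _)).trans (le_mul_of_one_le_right (by positivity) hs)
    have hvalue : |nodeValue l α κ s j| ≤ b j * s := by
      rw [nodeValue, mul_right_comm, add_mul]
      refine (abs_add_le _ _).trans (add_le_add ?_ ?_)
      · exact le_mul_of_one_le_right (abs_nonneg _) hs
      · rw [abs_mul _ s, abs_of_nonneg (by omega : 0 ≤ s)]
    calc |nodeCoeff l α κ s j|
        ≤ |κ j * s| * ∑ k ∈ range l,
            |nodeValue l α κ s j ^ k * (α j ^ (Fintype.card ι + 1)) ^ (l - 1 - k)| := by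
          rw [nodeCoeff, abs_mul]
          gcongr
          exact abs_sum_le_sum_abs _ _
      _ ≤ |κ j * s| * ∑ _ ∈ range l, (b j * s) ^ (l - 1) := by
          gcongr with _ hk
          rw [abs_mul, abs_pow, abs_pow,
            ← pow_mul_pow_sub (b j * s) (Nat.le_sub_one_of_lt (mem_range.mp hk))]
          gcongr
      _ = |κ j| * l * b j ^ (l - 1) * s ^ l := by
          rw [abs_mul, abs_of_nonneg (by omega : 0 ≤ s), sum_const, card_range, nsmul_eq_mul,
            mul_pow, ← mul_pow_sub_one hl s]
          ring
  refine ⟨∑ j, |κ j| * l * b j ^ (l - 1), fun s hs j ↦ (hle s hs j).trans ?_⟩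
  gcongr
  exact single_le_sum (f := fun j ↦ |κ j| * l * b j ^ (l - 1)) (fun _ _ ↦ by positivity)
    (mem_univ j)

theorem mul_pow_le_nodeCoeff (hl : l ≠ 0) {α κ : ι → ℤ} {s : ℤ} {j : ι} (hα : 0 ≤ α j)
    (hκ : 0 < κ j) (hgap : 0 < nodeGap (α ^ l) j) (hs : 0 ≤ s) :
    κ j * s ^ l ≤ nodeCoeff l α κ s j := by
  have hvalue : s ≤ nodeValue l α κ s j := by
    have hone : 1 ≤ κ j * nodeGap (α ^ l) j := mul_pos hκ hgap
    have := le_mul_of_one_le_right hs hone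
    rw [nodeValue]
    linarith [pow_nonneg hα (Fintype.card ι + 1)]
  calc κ j * s ^ l = κ j * s * s ^ (l - 1) := by rw [mul_assoc, mul_pow_sub_one hl]
    _ ≤ κ j * s * (nodeValue l α κ s j ^ (l - 1) *
          (α j ^ (Fintype.card ι + 1)) ^ (l - 1 - (l - 1))) := by
        rw [Nat.sub_self, pow_zero, mul_one]
        gcongr
    _ ≤ nodeCoeff l α κ s j := by
        rw [nodeCoeff]
        gcongr
        exact single_le_sum (f := fun k ↦ nodeValue l α κ s j ^ k *
          (α j ^ (Fintype.card ι + 1)) ^ (l - 1 - k))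
          (fun k _ ↦ mul_nonneg (pow_nonneg (hs.trans hvalue) _) (by positivity))
          (mem_range.mpr (Nat.sub_one_lt hl))

theorem nodeGap_pos_of_forall_le {a : ι → ℤ} (ha : Injective a) (hmax : ∀ j, a j ≤ a m) :
    0 < nodeGap a m :=
  prod_pos fun k hk ↦ sub_pos.mpr ((hmax k).lt_of_ne (ha.ne (ne_of_mem_erase hk)))

theorem eventually_sum_nodeCoeff_update_pos (hl : l ≠ 0) {α κ : ι → ℤ} (hα : 0 ≤ α m)
    (hgap : 0 < nodeGap (α ^ l) m) :
    ∀ᶠ x in atTop, ∀ s ≥ 1, 0 < ∑ j, nodeCoeff l α (update κ m x) s j := by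
  obtain ⟨B, hB⟩ := exists_abs_nodeCoeff_le hl α κ
  filter_upwards [eventually_gt_atTop 0, eventually_gt_atTop (#(univ.erase m) * B)]
    with x hx₀ hx s hs
  have hself : x * s ^ l ≤ nodeCoeff l α (update κ m x) s m := by
    simpa using mul_pow_le_nodeCoeff (κ := update κ m x) hl hα (by rwa [update_self]) hgap
      (by omega : 0 ≤ s)
  have hother : #(univ.erase m) • -(B * s ^ l) ≤
      ∑ j ∈ univ.erase m, nodeCoeff l α (update κ m x) s j := by
    refine card_nsmul_le_sum _ _ _ fun j hj ↦ ?_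
    rw [nodeCoeff_update_of_ne _ _ _ _ _ (ne_of_mem_erase hj)]
    exact (abs_le.mp (hB s hs j)).1
  rw [← sum_erase_add _ _ (mem_univ m)]
  rw [nsmul_eq_mul] at hother
  have hs' : 0 < s ^ l := by positivity
  nlinarith

theorem exists_pos_modEq_of_eventually {P : ℤ → Prop} (hP : ∀ᶠ x in atTop, P x) (r : ℤ) {N : ℤ}
    (hN : 0 < N) : ∃ x, 0 < x ∧ x ≡ r [ZMOD N] ∧ P x := by
  have htendsto : Tendsto (fun t ↦ r + N * t) atTop atTop :=
    tendsto_atTop_add_const_left _ _ (tendsto_id.const_mul_atTop' hN)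
  obtain ⟨t, hpos, ht⟩ := (htendsto.eventually ((eventually_gt_atTop 0).and hP)).exists
  exact ⟨r + N * t, hpos, by simp [Int.ModEq], ht⟩

/-- Positive weights for which the `X ^ (n - 2)`-coefficient of `interpolant` is positive, and a
common divisor of the value and the derivative of `interpolant` at a node is a divisor of a fixed
non-zero integer, the exceptional integer. -/
structure IsAdmissibleWeight (l : ℕ) (α κ : ι → ℤ) : Prop where
  pos : ∀ j, 0 < κ j
  sum_nodeCoeff_pos : ∀ s ≥ 1, 0 < ∑ j, nodeCoeff l α κ s j
  exists_exceptional : ∃ E ≠ 0, ∀ s j d, d ∣ nodeValue l α κ s j →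
    d ∣ (interpolant l α κ s).derivative.eval (α j ^ l) → d ∣ E

theorem exists_exceptional_of_eval_derivative_ne_zero {K : Type*} [IsDomain R] [Field K]
    [Algebra R K] [FaithfulSMul R K] {α κ : ι → R} (hinj : Injective (α ^ l)) (hκ : ∀ j, κ j ≠ 0)
    (hne : ∀ j, (interpolant l (algebraMap R K ∘ α) (algebraMap R K ∘ κ)
      (criticalParameter l (algebraMap R K ∘ α) (algebraMap R K ∘ κ) j)).derivative.eval
        (algebraMap R K (α j) ^ l) ≠ 0) :
    ∃ E ≠ 0, ∀ s j d, d ∣ nodeValue l α κ s j →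
      d ∣ (interpolant l α κ s).derivative.eval (α j ^ l) → d ∣ E := by
  set h : ι → R[X] := fun j ↦
    (interpolant l (C ∘ α) (C ∘ κ) (X : R[X])).derivative.eval (C (α j ^ l))
  have heval (s : R) (j : ι) :
      (h j).eval s = (interpolant l α κ s).derivative.eval (α j ^ l) := by
    simpa [h, comp_def] using map_eval_derivative_interpolant (evalRingHom s) l (C ∘ α) (C ∘ κ) X
      (C (α j ^ l))
  have haeval (y : K) (j : ι) : aeval y (h j) = (interpolant l (algebraMap R K ∘ α)
      (algebraMap R K ∘ κ) y).derivative.eval (algebraMap R K (α j) ^ l) := by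
    simpa [h, comp_def] using map_eval_derivative_interpolant (aeval y : R[X] →ₐ[R] K).toRingHom l
      (C ∘ α) (C ∘ κ) X (C (α j ^ l))
  have hexists (j : ι) : ∃ e : R, e ≠ 0 ∧ ∀ s d,
      d ∣ α j ^ (Fintype.card ι + 1) + κ j * nodeGap (α ^ l) j * s → d ∣ (h j).eval s → d ∣ e := by
    have hlead : algebraMap R K (κ j * nodeGap (α ^ l) j) ≠ 0 :=
      (FaithfulSMul.algebraMap_injective R K).ne_iff' (map_zero _) |>.mpr
        (mul_ne_zero (hκ j) (nodeGap_ne_zero hinj j))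
    refine exists_ne_zero_forall_dvd_of_aeval_ne_zero (K := K) (h j) hlead ?_
    rw [haeval]
    simpa [criticalParameter, map_nodeGap] using hne j
  choose e he_ne he using hexists
  refine ⟨∏ j, e j, prod_ne_zero_iff.mpr fun j _ ↦ he_ne j, fun s j d hd hd' ↦ ?_⟩
  refine (he j s d ?_ (heval s j ▸ hd')).trans (dvd_prod_of_mem e (mem_univ j))
  rwa [mul_right_comm]

theorem exists_isAdmissibleWeight_modEq [Nontrivial ι] (hl : l ≠ 0) {α : ι → ℤ}
    (hα : ∀ j, 0 < α j) (hinj : Injective (α ^ l)) (r : ι → ℤ) {N : ℤ} (hN : 0 < N) :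
    ∃ κ, IsAdmissibleWeight l α κ ∧ ∀ j, κ j ≡ r j [ZMOD N] := by
  obtain ⟨m, hmax⟩ := Finite.exists_max (α ^ l)
  choose κ hκ hκr _ using fun j ↦ exists_pos_modEq_of_eventually (.of_forall fun _ ↦ trivial)
    (r j) hN
  set φ := algebraMap ℤ ℝ
  have hφ (x : ℤ) : update (φ ∘ κ) m (φ x) = φ ∘ update κ m x := (comp_update φ κ m x).symm
  have hφα : ∀ j, 0 < (φ ∘ α) j := fun j ↦ Int.cast_pos.mpr (hα j)
  have hφκ : ∀ j, 0 < (φ ∘ κ) j := fun j ↦ Int.cast_pos.mpr (hκ j)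
  have hφinj : Injective ((φ ∘ α) ^ l) := by
    rw [← map_comp_pow]
    exact Int.cast_injective.comp hinj
  have hφmax : ∀ j, ((φ ∘ α) ^ l) j ≤ ((φ ∘ α) ^ l) m := by
    rw [← map_comp_pow]
    exact fun j ↦ Int.cast_le.mpr (hmax j)
  have hderiv : ∀ᶠ x : ℤ in atTop, ∀ j, (interpolant l (φ ∘ α) (φ ∘ update κ m x)
      (criticalParameter l (φ ∘ α) (φ ∘ update κ m x) j)).derivative.eval (φ (α j) ^ l) ≠ 0 := by
    filter_upwards [tendsto_intCast_atTop_atTop.eventually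
      (eventually_forall_eval_derivative_criticalParameter_ne_zero hl hφα hφκ hφinj hφmax)]
      with x hx j
    exact hφ x ▸ hx j
  have hsum := eventually_sum_nodeCoeff_update_pos (κ := κ) hl (hα m).le
    (nodeGap_pos_of_forall_le hinj hmax)
  obtain ⟨x, hx₀, hxr, hx, hx'⟩ := exists_pos_modEq_of_eventually (hderiv.and hsum) (r m) hN
  have hpos : ∀ j, 0 < update κ m x j := (forall_update_iff κ fun _ y ↦ 0 < y).mpr
    ⟨hx₀, fun j _ ↦ hκ j⟩
  exact ⟨update κ m x, ⟨hpos, hx',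
    exists_exceptional_of_eval_derivative_ne_zero hinj (fun j ↦ (hpos j).ne') hx⟩,
    (forall_update_iff κ fun j y ↦ y ≡ r j [ZMOD N]).mpr ⟨hxr, fun j _ ↦ hκr j⟩⟩

end Weights

section Coefficients

open Polynomial Finset Lagrange

variable {ι R : Type*} [Fintype ι] [DecidableEq ι] [CommRing R] {l : ℕ}

theorem dvd_nodeCoeff (l : ℕ) (α κ : ι → R) (s : R) (j : ι) : s ∣ nodeCoeff l α κ s j :=
  (dvd_mul_left _ _).mul_right _

theorem sq_dvd_nodeCoeff_sub (l : ℕ) (α κ : ι → R) (s : R) (j : ι) :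
    s ^ 2 ∣ nodeCoeff l α κ s j - s * nodeSlope l α κ j := by
  set A := α j ^ (Fintype.card ι + 1)
  have hval : s ∣ nodeValue l α κ s j - A := ⟨κ j * nodeGap (α ^ l) j, by rw [nodeValue]; ring⟩
  have hsum : s ∣ ∑ k ∈ range l, (nodeValue l α κ s j ^ k - A ^ k) * A ^ (l - 1 - k) :=
    dvd_sum fun k _ ↦ (hval.trans (sub_dvd_pow_sub_pow _ _ k)).mul_right _
  have hconst : ∑ k ∈ range l, A ^ k * A ^ (l - 1 - k) = l * A ^ (l - 1) := by
    rw [geom_sum₂_self]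
  simp only [sub_mul, sum_sub_distrib, hconst] at hsum
  convert (mul_dvd_mul_left s hsum).mul_left (κ j) using 1
  · rw [sq]
  · rw [nodeCoeff, nodeSlope]
    ring

theorem dvd_coeff_interpolant (l : ℕ) (α κ : ι → R) (s : R) {m : ℕ} (hm : m ≤ Fintype.card ι) :
    s ∣ (interpolant l α κ s).coeff m := by
  rw [coeff_interpolant l α κ s hm]
  exact dvd_sum fun j _ ↦ (dvd_nodeCoeff l α κ s j).mul_right _

/-- The coefficient of `s` in the constant coefficient of `interpolant l α κ s`, viewed as a
polynomial in `s`. -/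
noncomputable def interpolantSlope (l : ℕ) (α κ : ι → R) : R :=
  ∑ j, nodeSlope l α κ j * (coNodal (α ^ l) j).coeff 0

theorem sq_dvd_coeff_zero_interpolant_sub (l : ℕ) (α κ : ι → R) (s : R) :
    s ^ 2 ∣ (interpolant l α κ s).coeff 0 - s * interpolantSlope l α κ := by
  rw [coeff_interpolant l α κ s (Nat.zero_le _), interpolantSlope, mul_sum, ← sum_sub_distrib]
  refine dvd_sum fun j _ ↦ ?_
  rw [← mul_assoc, ← sub_mul]
  exact (sq_dvd_nodeCoeff_sub l α κ s j).mul_right _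

theorem coeff_zero_coNodal (a : ι → R) (j : ι) :
    (coNodal a j).coeff 0 = (-1) ^ (Fintype.card ι - 1) * ∏ k ∈ univ.erase j, a k := by
  rw [coeff_zero_eq_eval_zero, coNodal, eval_nodal]
  simp [prod_neg, card_erase_of_mem]

theorem interpolantSlope_ne_zero [LinearOrder R] [IsStrictOrderedRing R] [Nonempty ι] (hl : l ≠ 0)
    {α κ : ι → R} (hα : ∀ j, 0 < α j) (hκ : ∀ j, 0 < κ j) : interpolantSlope l α κ ≠ 0 := by
  have hpos : 0 < ∑ j, nodeSlope l α κ j * ∏ k ∈ univ.erase j, (α ^ l) k :=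
    sum_pos (fun j _ ↦ mul_pos (nodeSlope_pos hl hα hκ j) (prod_pos fun k _ ↦ pow_pos (hα k) l))
      univ_nonempty
  have hsign : interpolantSlope l α κ = (-1) ^ (Fintype.card ι - 1) *
      ∑ j, nodeSlope l α κ j * ∏ k ∈ univ.erase j, (α ^ l) k := by
    simp only [interpolantSlope, coeff_zero_coNodal, mul_sum, mul_left_comm]
  rw [hsign]
  exact mul_ne_zero (pow_ne_zero _ (neg_ne_zero.mpr one_ne_zero)) hpos.ne'

theorem isEisensteinAt_interpolant [IsDomain R] {q s : R} (hq : Prime q) {α κ : ι → R}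
    (hqs : q ∣ s) (hqs₂ : ¬ q ^ 2 ∣ s) (hslope : ¬ q ∣ interpolantSlope l α κ) :
    (interpolant l α κ s).IsEisensteinAt (Ideal.span {q}) where
  leading := by
    rw [monic_interpolant l α κ s, Ideal.mem_span_singleton]
    exact hq.not_dvd_one
  mem {m} hm := by
    rw [natDegree_interpolant, Nat.lt_succ_iff] at hm
    exact Ideal.mem_span_singleton.mpr (hqs.trans (dvd_coeff_interpolant l α κ s hm))
  notMem := by
    rw [Ideal.span_singleton_pow, Ideal.mem_span_singleton]
    intro hdvd
    have hsub := (pow_dvd_pow_of_dvd hqs 2).trans (sq_dvd_coeff_zero_interpolant_sub l α κ s)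
    exact hqs₂ (hq.pow_dvd_of_dvd_mul_right 2 hslope ((dvd_sub_right hdvd).mp hsub))

theorem exists_abs_coeff_interpolant_le (hl : l ≠ 0) (α κ : ι → ℤ) :
    ∃ B, ∀ s ≥ 1, ∀ m, |(interpolant l α κ s).coeff m| ≤ B * s ^ l := by
  obtain ⟨b, hb⟩ := exists_abs_nodeCoeff_le hl α κ
  set h := fun j ↦ ∑ m ∈ range (Fintype.card ι + 1), |(coNodal (α ^ l) j).coeff m|
  have hcoeff : ∀ j m, |(coNodal (α ^ l) j).coeff m| ≤ h j := by
    intro j m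
    obtain hm | hm := lt_or_ge m (Fintype.card ι + 1)
    · exact single_le_sum (f := fun m ↦ |(coNodal (α ^ l) j).coeff m|)
        (fun _ _ ↦ abs_nonneg _) (mem_range.mpr hm)
    · rw [coeff_eq_zero_of_natDegree_lt (by rw [natDegree_coNodal]; omega), abs_zero]
      positivity
  refine ⟨1 + ∑ j, b * h j, fun s hs m ↦ ?_⟩
  have hX : |(X ^ (Fintype.card ι + 1) : ℤ[X]).coeff m| ≤ s ^ l := by
    rw [coeff_X_pow]
    have := one_le_pow₀ hs (n := l)
    split_ifs <;> norm_num <;> omega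
  calc |(interpolant l α κ s).coeff m|
      ≤ |(X ^ (Fintype.card ι + 1) : ℤ[X]).coeff m| +
          ∑ j, |nodeCoeff l α κ s j| * |(coNodal (α ^ l) j).coeff m| := by
        simp only [interpolant, coeff_add, finsetSum_coeff, coeff_C_mul, ← abs_mul]
        grw [abs_add_le, abs_sum_le_sum_abs]
    _ ≤ s ^ l + ∑ j, b * s ^ l * h j := by
        grw [hX]
        gcongr with j
        exacts [(abs_nonneg _).trans (hb s hs j), hb s hs j, hcoeff j m]
    _ = (1 + ∑ j, b * h j) * s ^ l := by
        rw [add_mul, sum_mul, one_mul]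
        exact congrArg _ (sum_congr rfl fun j _ ↦ by ring)

end Coefficients

section AuxiliaryPrimes

open Finset Function

theorem exists_injective_primes (T : Type*) [Countable T] (B : ℕ) {D : ℕ} (hD : D ≠ 0) :
    ∃ Q : T → ℕ, Injective Q ∧ ∀ τ, (Q τ).Prime ∧ B < Q τ ∧ D ∣ Q τ - 1 := by
  have hinf : {Q : ℕ | Q.Prime ∧ B < Q ∧ D ∣ Q - 1}.Infinite := by
    refine Set.infinite_iff_exists_gt.mpr fun b ↦ ?_
    obtain ⟨Q, hQ, hgt, hmod⟩ := Nat.exists_prime_gt_modEq_one (b + B) hD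
    exact ⟨Q, ⟨hQ, by omega, (Nat.modEq_iff_dvd' hQ.one_le).mp hmod.symm⟩, by omega⟩
  have := hinf.to_subtype
  obtain ⟨e, he⟩ := Countable.exists_injective_nat T
  let g := Infinite.natEmbedding {Q : ℕ | Q.Prime ∧ B < Q ∧ D ∣ Q - 1}
  exact ⟨fun τ ↦ g (e τ), Subtype.val_injective.comp (g.injective.comp he), fun τ ↦ (g (e τ)).2⟩

variable {T : Type*} {Q : T → ℕ} [hprime : ∀ τ, Fact (Q τ).Prime]

theorem coprime_of_injective (hQ : Injective Q) : Pairwise (Nat.Coprime on Q) := fun _ _ hne ↦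
  (Nat.coprime_primes Fact.out Fact.out).mpr (hQ.ne hne)

theorem exists_intCast_eq [Fintype T] (hQ : Injective Q) (c : ∀ τ, ZMod (Q τ)) :
    ∃ k : ℤ, 0 < k ∧ k ≤ ∏ τ, (Q τ : ℤ) ∧ ∀ τ, (k : ZMod (Q τ)) = c τ := by
  have hN : (0 : ℤ) < (∏ τ, Q τ : ℕ) := mod_cast prod_pos fun τ _ ↦ (hprime τ).out.pos
  obtain ⟨z, hz⟩ := (ZMod.prodEquivPi Q (coprime_of_injective hQ)).surjective c
  obtain ⟨k, rfl⟩ := ZMod.intCast_surjective z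
  refine ⟨(k - 1) % (∏ τ, Q τ : ℕ) + 1, by linarith [Int.emod_nonneg (k - 1) hN.ne'], ?_,
    fun τ ↦ ?_⟩
  · rw [← Nat.cast_prod]
    exact Int.emod_lt_of_pos _ hN
  · have hmod : (k - 1) % (∏ τ, Q τ : ℕ) + 1 ≡ k [ZMOD Q τ] := by
      convert ((Int.mod_modEq _ _).of_dvd
        (Int.natCast_dvd_natCast.mpr (dvd_prod_of_mem Q (mem_univ τ)))).add_right 1
      ring
    rw [← congrFun hz τ, (ZMod.intCast_eq_intCast_iff _ _ _).mpr hmod, map_intCast]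
    rfl

theorem exists_comp_eq_puncturedOne {ι P : Type*} [Finite ι] [DecidableEq ι] [Finite P]
    {Q : ι × P → ℕ} [hprime : ∀ τ, Fact (Q τ).Prime] (hQ : Injective Q) :
    ∃ α : ι → ℤ, (∀ j, 0 < α j) ∧
      (∀ τ, Int.castRingHom (ZMod (Q τ)) ∘ α = puncturedOne τ.1) ∧
      ∀ j (π : ℕ), π.Prime → (π : ℤ) ∣ α j → π ∈ Set.range Q := by
  have := Fintype.ofFinite ι
  have := Fintype.ofFinite P
  set N := ∏ τ, (Q τ - 1)
  have hN : N ≠ 0 := prod_ne_zero_iff.mpr fun τ _ ↦ (Nat.sub_pos_of_lt (hprime τ).out.one_lt).ne'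
  refine ⟨fun j ↦ ((∏ p, Q (j, p)) ^ N : ℕ), fun j ↦ ?_, fun τ ↦ funext fun j ↦ ?_,
    fun j π hπ hdvd ↦ ?_⟩
  · have : 0 < ∏ p, Q (j, p) := prod_pos fun p _ ↦ (hprime _).out.pos
    positivity
  · simp only [comp_apply, eq_intCast, Nat.cast_pow, Int.cast_pow, Int.cast_natCast]
    obtain rfl | hj := eq_or_ne j τ.1
    · have hzero : ((∏ p, Q (τ.1, p) : ℕ) : ZMod (Q τ)) = 0 :=
        (ZMod.natCast_eq_zero_iff _ _).mpr (dvd_prod_of_mem (fun p ↦ Q (τ.1, p)) (mem_univ τ.2))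
      rw [hzero, zero_pow hN, puncturedOne_self]
    · have hne : ((∏ p, Q (j, p) : ℕ) : ZMod (Q τ)) ≠ 0 := by
        rw [Nat.cast_prod, prod_ne_zero_iff]
        intro p _ hzero
        rw [ZMod.natCast_eq_zero_iff, Nat.prime_dvd_prime_iff_eq Fact.out Fact.out] at hzero
        exact hj (congrArg Prod.fst (hQ hzero)).symm
      obtain ⟨m, hm⟩ : Q τ - 1 ∣ N := dvd_prod_of_mem _ (mem_univ τ)
      rw [hm, pow_mul, ZMod.pow_card_sub_one_eq_one hne, one_pow, puncturedOne_of_ne hj]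
  · obtain ⟨p, _, hp⟩ := (hπ.prime.dvd_finsetProd_iff _).mp
      (hπ.dvd_of_dvd_pow (Int.natCast_dvd_natCast.mp hdvd))
    exact ⟨(j, p), ((Nat.prime_dvd_prime_iff_eq hπ Fact.out).mp hp).symm⟩

theorem exists_not_dvd_and_forall_prime_dvd_or_mem {E : ℕ} (hE : E ≠ 0) (S : Set ℕ) :
    ∃ e > 0, (∀ π ∈ S, π.Prime → ¬ π ∣ e) ∧ ∀ π, π.Prime → π ∣ E → π ∣ e ∨ π ∈ S := by
  classical
  refine ⟨∏ π ∈ E.primeFactors with π ∉ S, π, prod_pos fun π hπ ↦ ?_, fun π hπ hp hdvd ↦ ?_,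
    fun π hp hdvd ↦ or_iff_not_imp_right.mpr fun hπ ↦ ?_⟩
  · exact (Nat.prime_of_mem_primeFactors (mem_filter.mp hπ).1).pos
  · obtain ⟨ρ, hρ, hdvd⟩ := (hp.prime.dvd_finsetProd_iff _).mp hdvd
    rw [mem_filter] at hρ
    rw [Nat.prime_dvd_prime_iff_eq hp (Nat.prime_of_mem_primeFactors hρ.1)] at hdvd
    exact hρ.2 (hdvd ▸ hπ)
  · exact dvd_prod_of_mem id (mem_filter.mpr ⟨Nat.mem_primeFactors.mpr ⟨hp, hdvd, hE⟩, hπ⟩)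

theorem exists_dvd_not_sq_dvd_intCast_eq [Finite T] (hQ : Injective Q) (c : ∀ τ, ZMod (Q τ)) {E : ℤ}
    (hE : E ≠ 0) : ∃ B q₀ : ℕ, ∀ q, q.Prime → q₀ < q → ∃ s : ℤ, 1 ≤ s ∧ s ≤ B * q ∧
      (q : ℤ) ∣ s ∧ ¬ (q : ℤ) ^ 2 ∣ s ∧ (∀ τ, (s : ZMod (Q τ)) = c τ) ∧
      ∀ π : ℕ, π.Prime → (π : ℤ) ∣ E → (π : ℤ) ∣ s ∨ π ∈ Set.range Q := by
  have := Fintype.ofFinite T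
  obtain ⟨e, he, heQ, heE⟩ := exists_not_dvd_and_forall_prime_dvd_or_mem
    (Int.natAbs_ne_zero.mpr hE) (Set.range Q)
  refine ⟨e * ∏ τ, Q τ, e * ∏ τ, Q τ, fun q hq hlt ↦ ?_⟩
  have hqQ : ∀ τ, (q : ZMod (Q τ)) ≠ 0 := fun τ hzero ↦ by
    rw [ZMod.natCast_eq_zero_iff, Nat.prime_dvd_prime_iff_eq Fact.out hq] at hzero
    have hdvd : Q τ ∣ e * ∏ τ, Q τ := (dvd_prod_of_mem Q (mem_univ τ)).mul_left e
    have hpos : 0 < ∏ τ, Q τ := prod_pos fun τ _ ↦ (hprime τ).out.pos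
    exact hlt.not_ge (hzero ▸ Nat.le_of_dvd (Nat.mul_pos he hpos) hdvd)
  have heQ' : ∀ τ, (e : ZMod (Q τ)) ≠ 0 := fun τ hzero ↦
    heQ _ ⟨τ, rfl⟩ Fact.out ((ZMod.natCast_eq_zero_iff _ _).mp hzero)
  obtain ⟨k, hk, hk_le, hkc⟩ := exists_intCast_eq hQ fun τ ↦ c τ / (q * e)
  have hek : 0 < e * k := mul_pos (mod_cast he) hk
  have hek_le : e * k ≤ (e * ∏ τ, Q τ : ℕ) := by
    push_cast
    gcongr
  refine ⟨q * (e * k), mul_pos (mod_cast hq.pos) hek, ?_, dvd_mul_right _ _, ?_, fun τ ↦ ?_,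
    fun π hπ hdvd ↦ ?_⟩
  · rw [mul_comm]
    gcongr
  · rw [sq, mul_dvd_mul_iff_left (mod_cast hq.ne_zero)]
    exact fun hdvd ↦ (Int.le_of_dvd hek hdvd).not_gt (hek_le.trans_lt (mod_cast hlt))
  · have := hqQ τ
    have := heQ' τ
    push_cast
    rw [hkc]
    field_simp
  · refine (heE π hπ (Int.natCast_dvd.mp hdvd)).imp_left fun hdvd ↦ ?_
    exact ((Int.natCast_dvd_natCast.mpr hdvd).mul_right k).mul_left _

end AuxiliaryPrimes

section DefiningPolynomial

open Polynomial Finset Function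

variable {ι : Type*} [Fintype ι] [DecidableEq ι] {l : ℕ}

theorem isCoprime_eval_derivative_nodeValue {α κ : ι → ℤ} {s : ℤ} {S : Set ℕ} {E : ℤ} {j : ι}
    (hE : ∀ d, d ∣ nodeValue l α κ s j →
      d ∣ (interpolant l α κ s).derivative.eval (α j ^ l) → d ∣ E)
    (hEs : ∀ π : ℕ, π.Prime → (π : ℤ) ∣ E → (π : ℤ) ∣ s ∨ π ∈ S)
    (hα : ∀ π : ℕ, π.Prime → (π : ℤ) ∣ α j → π ∈ S)
    (hS : ∀ π ∈ S, ∃ x, IsGoodRoot l (Int.castRingHom (ZMod π) ∘ α) (Int.castRingHom (ZMod π) ∘ κ)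
      (Int.castRingHom (ZMod π) s) x) :
    IsCoprime ((interpolant l α κ s).derivative.eval (α j ^ l)) (nodeValue l α κ s j) := by
  rw [Int.isCoprime_iff_nat_coprime]
  refine Nat.coprime_of_dvd fun π hπ hderiv hval ↦ ?_
  rw [← Int.natCast_dvd] at hderiv hval
  suffices hmem : π ∈ S by
    obtain ⟨x, hx⟩ := hS π hmem
    have hnode := hx.nodes_not_multiple_root j
    rw [← map_nodeValue, comp_apply, ← map_pow, ← map_eval_derivative_interpolant, eq_intCast,
      eq_intCast, Ne, Ne, ZMod.intCast_zmod_eq_zero_iff_dvd,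
      ZMod.intCast_zmod_eq_zero_iff_dvd] at hnode
    exact hnode.elim (· hval) (· hderiv)
  refine (hEs π hπ (hE π hval hderiv)).elim (fun hs ↦ hα π hπ ?_) id
  rw [nodeValue, dvd_add_left ((hs.mul_left _).mul_right _)] at hval
  exact (Nat.prime_iff_prime_int.mp hπ).dvd_of_dvd_pow hval

omit [Fintype ι] in
theorem injective_pow_of_comp_eq_puncturedOne {R : Type*} [CommRing R] (hl : l ≠ 0) {α : ι → R}
    {F : ι → Type*} [∀ i, Field (F i)] {f : ∀ i, R →+* F i}
    (hα : ∀ i, f i ∘ α = puncturedOne i) : Injective (α ^ l) := by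
  intro i j hij
  by_contra hne
  have hmap : (f i ∘ (α ^ l)) i = (f i ∘ (α ^ l)) j := congrArg (f i) hij
  rw [map_comp_pow, hα, puncturedOne_pow hl, puncturedOne_self,
    puncturedOne_of_ne (Ne.symm hne)] at hmap
  exact zero_ne_one hmap

theorem exists_isGoodRoot_isUniqueNonPower_zmod (hι : 2 ≤ Fintype.card ι) (hl : l ≠ 0) {p Q : ℕ}
    [Fact Q.Prime] (hp : p ∈ (2 * l).primeFactors) (hdvd : 2 * l ∣ Q - 1)
    (hQ : (2 * l + 6 * (2 * l) ^ 2) ^ 2 < Q) (i : ι) :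
    ∃ (κ : ι → ZMod Q) (s x : ZMod Q), IsGoodRoot l (puncturedOne i) κ s x ∧
      IsUniqueNonPower p (fun j ↦ x - puncturedOne i j) i := by
  have hbound : ∀ m ≤ 2 * l, (m + 6 * m ^ 2) ^ 2 < Q := fun m hm ↦ hQ.trans_le' (by gcongr)
  have hne : ∀ m : ℕ, m ≠ 0 → m ≤ 2 * l → (m : ZMod Q) ≠ 0 := fun m hm hle hzero ↦ by
    have := Nat.le_of_dvd (Nat.pos_of_ne_zero hm) ((ZMod.natCast_eq_zero_iff _ _).mp hzero)
    nlinarith [hbound m hle]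
  have hp_dvd := Nat.dvd_of_mem_primeFactors hp
  rw [← ZMod.card Q] at hdvd hbound
  exact exists_isGoodRoot_isUniqueNonPower hι (mod_cast hne 2 two_ne_zero (by omega))
    (hne l hl (by omega)) (Nat.prime_of_mem_primeFactors hp) (hp_dvd.trans hdvd)
    (hbound p (Nat.le_of_dvd (by omega) hp_dvd)) (hbound l (by omega)) i

open scoped Nat in
/-- The choices that do not depend on the prime `q` at which the final polynomial is Eisenstein:
auxiliary primes indexed by a node and a prime factor of `2 * l`, bases and weights for
`interpolant`, and the parameter `s` and a root prescribed modulo each auxiliary prime.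
The factor `2` provides an auxiliary prime for each node even if `l = 1`. -/
structure AuxiliaryData (ι : Type*) [Fintype ι] [DecidableEq ι] (l : ℕ) where
  prime : ι × (2 * l).primeFactors → ℕ
  [fact_prime : ∀ τ, Fact (prime τ).Prime]
  injective_prime : Injective prime
  dvd_prime_sub_one : ∀ τ, 2 * l * (2 * (Fintype.card ι + 1))! ∣ prime τ - 1
  base : ι → ℤ
  base_pos : ∀ j, 0 < base j
  mem_range_of_dvd_base : ∀ j (π : ℕ), π.Prime → (π : ℤ) ∣ base j → π ∈ Set.range prime
  weight : ι → ℤ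
  isAdmissibleWeight : IsAdmissibleWeight l base weight
  parameter : ∀ τ, ZMod (prime τ)
  root : ∀ τ, ZMod (prime τ)
  isGoodRoot : ∀ τ, IsGoodRoot l (Int.castRingHom _ ∘ base) (Int.castRingHom _ ∘ weight)
    (parameter τ) (root τ)
  isUniqueNonPower : ∀ τ, IsUniqueNonPower τ.2.1 (fun j ↦ root τ - (base j ^ l : ℤ)) τ.1

theorem nonempty_auxiliaryData (hι : 2 ≤ Fintype.card ι) (hl : l ≠ 0) :
    Nonempty (AuxiliaryData ι l) := by
  have : Nontrivial ι := Fintype.one_lt_card_iff_nontrivial.mp hι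
  obtain ⟨Q, hinj, hQ⟩ := exists_injective_primes (ι × (2 * l).primeFactors)
    ((2 * l + 6 * (2 * l) ^ 2) ^ 2)
    (mul_ne_zero (mul_ne_zero two_ne_zero hl) (Nat.factorial_ne_zero (2 * (Fintype.card ι + 1))))
  have hfact : ∀ τ, Fact (Q τ).Prime := fun τ ↦ ⟨(hQ τ).1⟩
  choose κ s x hgood hunique using fun τ ↦ exists_isGoodRoot_isUniqueNonPower_zmod hι hl τ.2.2
    ((Dvd.intro _ rfl).trans (hQ τ).2.2) (hQ τ).2.1 τ.1
  obtain ⟨α, hα, hαQ, hαmem⟩ := exists_comp_eq_puncturedOne hinj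
  have htwo : 2 ∈ (2 * l).primeFactors :=
    Nat.mem_primeFactors.mpr ⟨Nat.prime_two, Dvd.intro _ rfl, by omega⟩
  have hαinj : Injective (α ^ l) :=
    injective_pow_of_comp_eq_puncturedOne hl fun i ↦ hαQ (i, ⟨2, htwo⟩)
  choose r _ _ hr using fun j ↦ exists_intCast_eq hinj fun τ ↦ κ τ j
  obtain ⟨w, hw, hwr⟩ := exists_isAdmissibleWeight_modEq hl hα hαinj r
    (N := ∏ τ, (Q τ : ℤ)) (prod_pos fun τ _ ↦ mod_cast (hQ τ).1.pos)
  have hwκ : ∀ τ, Int.castRingHom (ZMod (Q τ)) ∘ w = κ τ := fun τ ↦ funext fun j ↦ by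
    rw [← hr j τ]
    exact (ZMod.intCast_eq_intCast_iff _ _ _).mpr
      ((hwr j).of_dvd (dvd_prod_of_mem (fun τ ↦ (Q τ : ℤ)) (mem_univ τ)))
  have hαpow : ∀ τ j, ((α j ^ l : ℤ) : ZMod (Q τ)) = puncturedOne τ.1 j := fun τ j ↦ by
    rw [← puncturedOne_pow hl, ← hαQ τ]
    simp
  refine ⟨Q, hinj, fun τ ↦ (hQ τ).2.2, α, hα, hαmem, w, hw, s, x, fun τ ↦ ?_, fun τ ↦ ?_⟩
  · rw [hαQ, hwκ]
    exact hgood τ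
  · simp only [hαpow]
    exact hunique τ

open scoped Nat in
/-- The properties of `f` from which the root field of `f` inherits a class number divisible by `l`,
ramification at `q`, and a discriminant bounded in terms of `q`. The polynomial takes the `l`-th
powers `u j ^ l` at the nodes `a j`. -/
structure IsDefiningPolynomial (l q : ℕ) (B : ℤ) (a u : ι → ℤ) (f : ℤ[X]) : Prop where
  monic : f.Monic
  natDegree_eq : f.natDegree = Fintype.card ι + 1
  isEisensteinAt : f.IsEisensteinAt (Ideal.span {(q : ℤ)})
  abs_coeff_le : ∀ m, |f.coeff m| ≤ B * q ^ l
  coeff_card : f.coeff (Fintype.card ι) = 0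
  coeff_card_sub_one_pos : 0 < f.coeff (Fintype.card ι - 1)
  eval_node : ∀ j, f.eval (a j) = u j ^ l
  isCoprime_eval_derivative : ∀ j, IsCoprime (f.derivative.eval (a j)) (u j)
  exists_hasSeparatingRoot : ∀ p, p.Prime → p ∣ l → ∀ i, ∃ Q, ∃ _ : Fact Q.Prime,
    p * (2 * (Fintype.card ι + 1))! ∣ Q - 1 ∧
      HasSeparatingRoot (f.map (Int.castRingHom (ZMod Q))) (fun j ↦ (a j : ZMod Q)) p i

namespace AuxiliaryData

attribute [instance] fact_prime

variable (D : AuxiliaryData ι l)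

theorem hasSeparatingRoot {s : ℤ} {τ : ι × (2 * l).primeFactors}
    (hs : (s : ZMod (D.prime τ)) = D.parameter τ) :
    HasSeparatingRoot ((interpolant l D.base D.weight s).map (Int.castRingHom (ZMod (D.prime τ))))
      (fun j ↦ ((D.base j ^ l : ℤ) : ZMod (D.prime τ))) τ.2.1 τ.1 := by
  rw [map_interpolant, eq_intCast, hs]
  exact ⟨D.root τ, (D.isGoodRoot τ).eval_eq_zero, (D.isGoodRoot τ).derivative_ne_zero,
    D.isUniqueNonPower τ⟩

theorem exists_isDefiningPolynomial [Nonempty ι] (hl : l ≠ 0) : ∃ (B : ℤ) (q₀ : ℕ),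
    ∀ q, q.Prime → q₀ < q → ∃ u f, IsDefiningPolynomial l q B (D.base ^ l) u f := by
  obtain ⟨E, hE, hEdvd⟩ := D.isAdmissibleWeight.exists_exceptional
  obtain ⟨b, q₀, hparam⟩ := exists_dvd_not_sq_dvd_intCast_eq D.injective_prime D.parameter hE
  obtain ⟨B, hB⟩ := exists_abs_coeff_interpolant_le hl D.base D.weight
  have hslope := interpolantSlope_ne_zero hl D.base_pos D.isAdmissibleWeight.pos
  refine ⟨B * b ^ l, max q₀ (interpolantSlope l D.base D.weight).natAbs, fun q hq hlt ↦ ?_⟩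
  rw [max_lt_iff] at hlt
  obtain ⟨s, hs, hsq, hdvd, hndvd, hsc, hsE⟩ := hparam q hq hlt.1
  refine ⟨nodeValue l D.base D.weight s, interpolant l D.base D.weight s,
    monic_interpolant .., natDegree_interpolant .., ?_, fun m ↦ ?_, coeff_card_interpolant .., ?_,
    eval_interpolant l D.base D.weight s, fun j ↦ ?_, fun p hp hpl i ↦ ?_⟩
  · refine isEisensteinAt_interpolant (Nat.prime_iff_prime_int.mp hq) hdvd hndvd fun hq' ↦ ?_
    exact hlt.2.not_ge (Nat.le_of_dvd (Int.natAbs_pos.mpr hslope) (Int.natCast_dvd.mp hq'))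
  · have hB₀ : 0 ≤ B := by simpa using (abs_nonneg _).trans (hB 1 le_rfl 0)
    rw [mul_assoc, ← mul_pow]
    grw [hB s hs m, hsq]
  · rw [coeff_card_sub_one_interpolant]
    exact D.isAdmissibleWeight.sum_nodeCoeff_pos s hs
  · refine isCoprime_eval_derivative_nodeValue (hEdvd s j) hsE (D.mem_range_of_dvd_base j) ?_
    rintro _ ⟨τ, rfl⟩
    rw [eq_intCast, hsc]
    exact ⟨D.root τ, D.isGoodRoot τ⟩
  · set τ : ι × (2 * l).primeFactors :=
      (i, ⟨p, Nat.mem_primeFactors.mpr ⟨hp, hpl.mul_left 2, by omega⟩⟩)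
    exact ⟨D.prime τ, inferInstance,
      (mul_dvd_mul_right (hpl.mul_left 2) _).trans (D.dvd_prime_sub_one τ),
      D.hasSeparatingRoot (hsc τ)⟩

end AuxiliaryData

end DefiningPolynomial

section RootField

open Polynomial NumberField IntermediateField

theorem exists_intermediateField_minpoly_eq {f : ℤ[X]} (hmonic : f.Monic) (hirr : Irreducible f) :
    ∃ (K : IntermediateField ℚ ℂ) (_ : FiniteDimensional ℚ K) (θ : 𝓞 K),
      Algebra.adjoin ℚ {(θ : K)} = ⊤ ∧ minpoly ℤ θ = f := by
  obtain ⟨z, hz⟩ := IsAlgClosed.exists_aeval_eq_zero ℂ f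
    (hmonic.degree_pos_of_not_isUnit hirr.not_isUnit).ne'
  have hInt : IsIntegral ℤ z := ⟨f, hmonic, hz⟩
  have hIntℚ : IsIntegral ℚ z := hInt.tower_top
  let θ : 𝓞 ℚ⟮z⟯ := ⟨AdjoinSimple.gen ℚ z,
    (isIntegral_algebraMap_iff (algebraMap ℚ⟮z⟯ ℂ).injective).mp hInt⟩
  have hminpoly : minpoly ℤ θ = minpoly ℤ z :=
    (minpoly.algebraMap_eq (RingOfIntegers.coe_injective (K := ℚ⟮z⟯)) θ).symm.trans
      (minpoly.algebraMap_eq (algebraMap ℚ⟮z⟯ ℂ).injective (θ : ℚ⟮z⟯)).symm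
  refine ⟨ℚ⟮z⟯, adjoin.finiteDimensional hIntℚ, θ,
    (adjoin.powerBasis hIntℚ).adjoin_gen_eq_top, hminpoly.trans ?_⟩
  have hassoc : Associated (minpoly ℤ z) f :=
    (minpoly.irreducible hInt).associated_of_dvd hirr (minpoly.isIntegrallyClosed_dvd hInt hz)
  exact eq_of_monic_of_associated (minpoly.monic hInt) hmonic hassoc

variable {ι : Type*} [Fintype ι] {l q : ℕ} {B : ℤ} {a u : ι → ℤ}

namespace IsDefiningPolynomial

theorem irreducible {f : ℤ[X]} (hf : IsDefiningPolynomial l q B a u f) (hq : q.Prime) :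
    Irreducible f :=
  hf.isEisensteinAt.irreducible
    ((Ideal.span_singleton_prime (mod_cast hq.ne_zero)).mpr (Nat.prime_iff_prime_int.mp hq))
    hf.monic.isPrimitive (hf.natDegree_eq ▸ Nat.succ_pos _)

theorem le_abs_coeff_zero {f : ℤ[X]} (hf : IsDefiningPolynomial l q B a u f) :
    (q : ℤ) ≤ |f.coeff 0| := by
  have hdvd : (q : ℤ) ∣ f.coeff 0 :=
    Ideal.mem_span_singleton.mp (hf.isEisensteinAt.mem (hf.natDegree_eq ▸ Nat.succ_pos _))
  have hne : f.coeff 0 ≠ 0 := fun hzero ↦ hf.isEisensteinAt.notMem (hzero ▸ zero_mem _)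
  exact Int.le_of_dvd (abs_pos.mpr hne) ((dvd_abs _ _).mpr hdvd)

variable {K : Type*} [Field K] [NumberField K] {θ : 𝓞 K}

theorem finrank_eq (hf : IsDefiningPolynomial l q B a u (minpoly ℤ θ))
    (hθ : Algebra.adjoin ℚ {(θ : K)} = ⊤) : Module.finrank ℚ K = Fintype.card ι + 1 := by
  rw [← natDegree_minpoly_eq_finrank hθ, hf.natDegree_eq]

theorem dvd_discr [Nonempty ι] (hf : IsDefiningPolynomial l q B a u (minpoly ℤ θ)) (hq : q.Prime) :
    (q : ℤ) ∣ discr K :=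
  dvd_discr_of_isEisensteinAt (Nat.prime_iff_prime_int.mp hq)
    (hf.natDegree_eq ▸ Nat.succ_le_succ Fintype.card_pos) hf.isEisensteinAt

theorem abs_discr_mul_le [Nonempty ι] (hf : IsDefiningPolynomial l q B a u (minpoly ℤ θ))
    (hθ : Algebra.adjoin ℚ {(θ : K)} = ⊤) :
    |(discr K : ℝ)| * q ≤
      ((Fintype.card ι + 2) ^ 2 * B) ^ (2 * Fintype.card ι) * q ^ (2 * Fintype.card ι * l) := by
  have hdeg := hf.natDegree_eq
  have hq : (q : ℝ) ≤ |((minpoly ℤ θ).coeff 0 : ℝ)| := mod_cast hf.le_abs_coeff_zero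
  have hbound := abs_discr_mul_abs_coeff_zero_le hθ (hdeg ▸ Nat.succ_le_succ Fintype.card_pos)
    (by rw [hdeg]; exact hf.coeff_card) (B := B * q ^ l) fun k _ ↦ mod_cast hf.abs_coeff_le k
  rw [hdeg] at hbound
  calc |(discr K : ℝ)| * q ≤ |(discr K : ℝ)| * |((minpoly ℤ θ).coeff 0 : ℝ)| := by gcongr
    _ ≤ _ := hbound
    _ = _ := by
      rw [Nat.add_sub_cancel, ← mul_assoc, mul_pow _ ((q : ℝ) ^ l), ← pow_mul, mul_comm l]
      push_cast
      ring

theorem dvd_classNumber [Nonempty ι] (hf : IsDefiningPolynomial l q B a u (minpoly ℤ θ))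
    (hθ : Algebra.adjoin ℚ {(θ : K)} = ⊤) (hl : l ≠ 0) : l ∣ classNumber K := by
  have hdeg := hf.natDegree_eq
  have hrank := rank_add_one_lt_finrank_of_coeff_minpoly (K := K) (θ := θ)
    (hdeg ▸ Nat.succ_le_succ Fintype.card_pos) (by rw [hdeg]; exact hf.coeff_card)
    (by rw [hdeg]; exact hf.coeff_card_sub_one_pos)
  have hfinrank := hf.finrank_eq hθ
  refine dvd_classNumber_of_hasSeparatingRoot hθ (by omega) hl hf.eval_node
    hf.isCoprime_eval_derivative fun p hp hpl i ↦ ?_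
  rw [hfinrank]
  exact hf.exists_hasSeparatingRoot p hp hpl i

end IsDefiningPolynomial

theorem exists_intermediateField_dvd_classNumber {n l : ℕ} (hn : 3 ≤ n) (hl : l ≠ 0) :
    ∃ (C : ℝ) (q₀ : ℕ), ∀ q : ℕ, q.Prime → q₀ < q →
      ∃ (K : IntermediateField ℚ ℂ) (_ : FiniteDimensional ℚ K), Module.finrank ℚ K = n ∧
        (q : ℤ) ∣ discr K ∧ |(discr K : ℝ)| ≤ C * q ^ (2 * (n - 1) * l - 1) ∧
        l ∣ classNumber K := by
  have : Nonempty (Fin (n - 1)) := ⟨⟨0, by omega⟩⟩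
  obtain ⟨D⟩ := nonempty_auxiliaryData (ι := Fin (n - 1)) (by rw [Fintype.card_fin]; omega) hl
  obtain ⟨B, q₀, hB⟩ := D.exists_isDefiningPolynomial hl
  refine ⟨(((n - 1 : ℕ) + 2) ^ 2 * B) ^ (2 * (n - 1)), q₀, fun q hq hlt ↦ ?_⟩
  obtain ⟨u, f, hf⟩ := hB q hq hlt
  obtain ⟨K, _, θ, hθ, rfl⟩ := exists_intermediateField_minpoly_eq hf.monic (hf.irreducible hq)
  refine ⟨K, inferInstance, ?_, hf.dvd_discr hq, ?_, hf.dvd_classNumber hθ hl⟩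
  · rw [hf.finrank_eq hθ, Fintype.card_fin]
    omega
  · have hpos : 2 * (n - 1) * l ≠ 0 := mul_ne_zero (by omega) hl
    have hbound := hf.abs_discr_mul_le hθ
    rw [Fintype.card_fin, ← Nat.sub_add_cancel (Nat.one_le_iff_ne_zero.mpr hpos),
      pow_succ (q : ℝ), ← mul_assoc] at hbound
    exact le_of_mul_le_mul_right hbound (mod_cast hq.pos)

end RootField

section PrimeCount

open Filter Finset Function
open scoped Nat.Prime

theorem eventually_mul_rpow_le_rpow {a b : ℝ} (hab : a < b) (c : ℝ) :
    ∀ᶠ x : ℝ in atTop, c * x ^ a ≤ x ^ b := by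
  filter_upwards [(tendsto_rpow_atTop (sub_pos.mpr hab)).eventually_ge_atTop c,
    eventually_gt_atTop 0] with x hc hx
  rw [← sub_add_cancel b a, Real.rpow_add hx]
  gcongr

theorem eventually_rpow_mul_log_le {a b : ℝ} (hab : a < b) {c : ℝ} (hc : 0 < c) :
    ∀ᶠ x : ℝ in atTop, x ^ a * Real.log x ≤ c * x ^ b := by
  filter_upwards [(isLittleO_log_rpow_atTop (sub_pos.mpr hab)).bound hc,
    eventually_gt_atTop 1] with x hlog hx
  have hx₀ : 0 < x := one_pos.trans hx
  rw [Real.norm_of_nonneg (Real.log_nonneg hx.le), Real.norm_of_nonneg (by positivity)] at hlog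
  calc x ^ a * Real.log x ≤ x ^ a * (c * x ^ (b - a)) := by gcongr
    _ = c * x ^ b := by rw [mul_left_comm, ← Real.rpow_add hx₀, add_sub_cancel]

theorem eventually_rpow_le_primeCounting {γ : ℝ} (hγ : γ < 1) :
    ∀ᶠ x : ℝ in atTop, x ^ γ ≤ π ⌊x⌋₊ := by
  filter_upwards [eventually_rpow_mul_log_le hγ (c := 1 / 8) (by norm_num),
    eventually_rpow_mul_log_le zero_lt_one (c := 1 / 16) (by norm_num),
    eventually_ge_atTop 2] with x hγx hlog hx
  rw [Real.rpow_one] at hγx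
  rw [Real.rpow_zero, one_mul, Real.rpow_one] at hlog
  have hlog_add : Real.log (x + 2) ≤ 2 * Real.log x := by
    rw [← Nat.cast_two, ← Real.log_pow]
    exact Real.log_le_log (by positivity) (by push_cast; nlinarith)
  refine le_trans ?_ (Chebyshev.pi_ge' (by linarith))
  rw [le_div_iff₀ (Real.log_pos (by linarith))]
  nlinarith [Real.log_two_gt_d9]

theorem eventually_exists_mul_pow_le_rpow_le_primeCounting {d : ℕ} (hd : d ≠ 0) (C : ℝ) {ν : ℝ}
    (hν : ν < 1 / d) :
    ∀ᶠ X : ℝ in atTop, ∃ U : ℕ, C * U ^ d ≤ X ∧ X ^ ν ≤ π U := by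
  obtain ⟨γ, hγν, hγd⟩ := exists_between (max_lt hν (by positivity : (0 : ℝ) < 1 / d))
  obtain ⟨hνγ, hγ⟩ := max_lt_iff.mp hγν
  rw [lt_div_iff₀ (by positivity)] at hγd
  filter_upwards [(tendsto_rpow_atTop hγ).eventually
      (eventually_rpow_le_primeCounting ((div_lt_one hγ).mpr hνγ)),
    eventually_mul_rpow_le_rpow hγd |C|, eventually_ge_atTop 0] with X hprimes hC hX
  refine ⟨⌊X ^ γ⌋₊, ?_, ?_⟩
  · calc C * (⌊X ^ γ⌋₊ : ℝ) ^ d ≤ |C| * (X ^ γ) ^ d := by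
          gcongr
          · exact le_abs_self C
          · exact Nat.floor_le (by positivity)
      _ ≤ X := by rwa [← Real.rpow_mul_natCast hX, ← Real.rpow_one X, ← Real.rpow_mul hX, one_mul]
  · rwa [← Real.rpow_mul hX, mul_div_cancel₀ _ hγ.ne'] at hprimes

theorem natLog_two_floor_le {X : ℝ} (hX : 1 ≤ X) : (Nat.log 2 ⌊X⌋₊ : ℝ) ≤ 2 * Real.log X := by
  have hfloor : Real.log ⌊X⌋₊ ≤ Real.log X :=
    Real.log_le_log (mod_cast Nat.floor_pos.mpr hX) (Nat.floor_le (by positivity))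
  refine (Real.natLog_le_logb _ _).trans ?_
  rw [Real.logb, Nat.cast_two, div_le_iff₀ (by positivity)]
  nlinarith [Real.log_two_gt_d9, Real.log_nonneg hX]

theorem eventually_rpow_mul_natLog_add_le {μ ν : ℝ} (hμν : μ < ν) (hν : 0 < ν) (k : ℝ) :
    ∀ᶠ X : ℝ in atTop, X ^ μ * Nat.log 2 ⌊X⌋₊ + k ≤ X ^ ν := by
  filter_upwards [eventually_rpow_mul_log_le hμν (c := 1 / 4) (by norm_num),
    (tendsto_rpow_atTop hν).eventually_ge_atTop (2 * k), eventually_ge_atTop 1] with X hlog hk hX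
  have : X ^ μ * Nat.log 2 ⌊X⌋₊ ≤ X ^ μ * (2 * Real.log X) := by
    gcongr
    exact natLog_two_floor_le hX
  linarith

theorem card_primeFactors_le_log (n : ℕ) : #n.primeFactors ≤ Nat.log 2 n := by
  rcases eq_or_ne n 0 with rfl | hn
  · simp
  refine Nat.le_log_of_pow_le one_lt_two ?_
  calc 2 ^ #n.primeFactors ≤ ∏ p ∈ n.primeFactors, p :=
        pow_card_le_prod _ _ _ fun p hp ↦ (Nat.prime_of_mem_primeFactors hp).two_le
    _ ≤ n := Nat.le_of_dvd (Nat.pos_of_ne_zero hn) (Nat.prod_primeFactors_dvd n)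

theorem card_le_log_mul_card_image {T : Type*} {p : T → ℕ} (hinj : Injective p)
    (hp : ∀ t, (p t).Prime) {D : T → ℤ} (hD : ∀ t, D t ≠ 0) (hdvd : ∀ t, (p t : ℤ) ∣ D t)
    {P : Finset T} {N : ℕ} (hN : ∀ t ∈ P, (D t).natAbs ≤ N) : #P ≤ Nat.log 2 N * #(P.image D) := by
  refine card_le_mul_card_image P _ fun b hb ↦ ?_
  obtain ⟨t, ht, rfl⟩ := mem_image.mp hb
  have hmaps : ∀ r ∈ {r ∈ P | D r = D t}, p r ∈ (D t).natAbs.primeFactors := fun r hr ↦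
    Nat.mem_primeFactors.mpr ⟨hp r, Int.natCast_dvd.mp ((mem_filter.mp hr).2 ▸ hdvd r),
      Int.natAbs_ne_zero.mpr (hD t)⟩
  calc #{r ∈ P | D r = D t} ≤ #(D t).natAbs.primeFactors :=
        card_le_card_of_injOn p hmaps hinj.injOn
    _ ≤ Nat.log 2 (D t).natAbs := card_primeFactors_le_log _
    _ ≤ Nat.log 2 N := Nat.log_mono_right (hN t ht)

theorem primeCounting_le_card_primes_gt_add (q₀ U : ℕ) :
    π U ≤ #((range (U + 1)).subtype fun q ↦ q.Prime ∧ q₀ < q) + (q₀ + 1) := by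
  rw [← Nat.primesLE_card_eq_primeCounting, card_subtype, ← card_range (q₀ + 1)]
  refine (card_le_card fun q hq ↦ ?_).trans (card_union_le _ _)
  grind [Nat.mem_primesLE]

variable {d q₀ : ℕ} {C : ℝ} {D : {q : ℕ // q.Prime ∧ q₀ < q} → ℤ}

theorem exists_injOn_primeCounting_le (hD : ∀ q, D q ≠ 0) (hdvd : ∀ q, (q.1 : ℤ) ∣ D q)
    (hle : ∀ q, |(D q : ℝ)| ≤ C * q ^ d) {U : ℕ} {X : ℝ} (hUX : |C| * U ^ d ≤ X) :
    ∃ P : Finset {q : ℕ // q.Prime ∧ q₀ < q}, Set.InjOn D P ∧ (∀ q ∈ P, |(D q : ℝ)| ≤ X) ∧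
      π U ≤ Nat.log 2 ⌊X⌋₊ * #P + (q₀ + 1) := by
  set S := (range (U + 1)).subtype fun q ↦ q.Prime ∧ q₀ < q
  have hSX : ∀ q ∈ S, |(D q : ℝ)| ≤ X := fun q hq ↦ by
    have hqU : q.1 ≤ U := mem_range_succ_iff.mp (mem_subtype.mp hq)
    refine (hle q).trans (hUX.trans' ?_)
    gcongr
    exact le_abs_self C
  obtain ⟨P, hPS, hinj, himage⟩ := exists_subset_injOn_image_eq_of_surjOn (f := D) S (S.image D)
    (by rw [coe_image]; exact Set.surjOn_image D S)
  refine ⟨P, hinj, fun q hq ↦ hSX q (hPS hq), ?_⟩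
  grw [primeCounting_le_card_primes_gt_add q₀ U]
  rw [← card_image_of_injOn hinj, himage]
  gcongr
  refine card_le_log_mul_card_image Subtype.val_injective (fun q ↦ q.2.1) hD hdvd fun q hq ↦ ?_
  exact Nat.le_floor (by simpa [Nat.cast_natAbs] using hSX q hq)

theorem eventually_exists_injOn_rpow_le_card (hd : d ≠ 0) {μ : ℝ} (hμ : μ < 1 / d)
    (hD : ∀ q, D q ≠ 0) (hdvd : ∀ q, (q.1 : ℤ) ∣ D q) (hle : ∀ q, |(D q : ℝ)| ≤ C * q ^ d) :
    ∀ᶠ X : ℝ in atTop, ∃ P : Finset {q : ℕ // q.Prime ∧ q₀ < q},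
      Set.InjOn D P ∧ (∀ q ∈ P, |(D q : ℝ)| ≤ X) ∧ X ^ μ ≤ #P := by
  obtain ⟨ν, hν, hνd⟩ := exists_between (max_lt hμ (by positivity : (0 : ℝ) < 1 / d))
  obtain ⟨hμν, hν₀⟩ := max_lt_iff.mp hν
  filter_upwards [eventually_exists_mul_pow_le_rpow_le_primeCounting hd |C| hνd,
    eventually_rpow_mul_natLog_add_le hμν hν₀ (q₀ + 1), eventually_ge_atTop 2]
    with X ⟨U, hUX, hUπ⟩ hlog hX
  obtain ⟨P, hinj, hPX, hcount⟩ := exists_injOn_primeCounting_le hD hdvd hle hUX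
  refine ⟨P, hinj, hPX, ?_⟩
  have hlog_pos : (0 : ℝ) < Nat.log 2 ⌊X⌋₊ :=
    mod_cast Nat.log_pos one_lt_two (Nat.le_floor (mod_cast hX))
  have hcount' : (π U : ℝ) ≤ Nat.log 2 ⌊X⌋₊ * #P + (q₀ + 1) := mod_cast hcount
  refine le_of_mul_le_mul_left ?_ hlog_pos
  linarith

end PrimeCount

open Filter in
theorem class_number_divisibility_count_general {n ℓ : ℕ} (hn : 3 ≤ n) (hℓ : 1 ≤ ℓ) {μ : ℝ}
    (hμ : μ < 1 / (2 * ((n : ℝ) - 1) * ℓ - 1)) :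
    ∀ᶠ X : ℝ in atTop, ∃ (m : ℕ) (K : Fin m → IntermediateField ℚ ℂ),
      X ^ μ ≤ m ∧ (∀ i j, i ≠ j → IsEmpty (K i ≃+* K j)) ∧
      ∀ i, ∃ _ : FiniteDimensional ℚ (K i), Module.finrank ℚ (K i) = n ∧
        |(NumberField.discr (K i) : ℝ)| ≤ X ∧ ℓ ∣ NumberField.classNumber (K i) := by
  obtain ⟨C, q₀, hfield⟩ :=
    exists_intermediateField_dvd_classNumber hn (Nat.one_le_iff_ne_zero.mp hℓ)
  choose K hfin hfinrank hdvd hbound hclass using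
    fun q : {q : ℕ // q.Prime ∧ q₀ < q} ↦ hfield q q.2.1 q.2.2
  have htwo : 2 ≤ 2 * (n - 1) * ℓ := Nat.le_mul_of_pos_right _ hℓ |>.trans' (by omega)
  have hμ' : μ < 1 / (2 * (n - 1) * ℓ - 1 : ℕ) := by
    rwa [Nat.cast_sub (by omega), Nat.cast_mul, Nat.cast_mul, Nat.cast_sub (by omega),
      Nat.cast_one, Nat.cast_two]
  filter_upwards [eventually_exists_injOn_rpow_le_card (by omega) hμ'
    (fun q ↦ NumberField.discr_ne_zero (K q)) hdvd hbound] with X ⟨P, hinj, hPX, hcard⟩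
  refine ⟨P.card, fun i ↦ K (P.equivFin.symm i), hcard, fun i j hij ↦ ⟨fun e ↦ hij ?_⟩,
    fun i ↦ ⟨hfin _, hfinrank _, hPX _ (P.equivFin.symm i).2, hclass _⟩⟩
  have hdiscr := NumberField.discr_eq_discr_of_ringEquiv _ e
  exact P.equivFin.symm.injective (Subtype.ext (hinj (Subtype.prop _) (Subtype.prop _) hdiscr))

/-- **Divisibility of class numbers, enumerative version.**
Let `n ≥ 3` and `ℓ ≥ 1` be integers and put `μ = 1/(2(n−1)ℓ)`.  There exist
`X₀ > 0` and `c > 0` (depending only on `n` and `ℓ`) such that for every real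
`X > X₀` there exist at least `c·X^μ` pairwise non-isomorphic number fields of
degree `n` over `ℚ`, with absolute discriminant at most `X` and class number
divisible by `ℓ`.  (Number fields are realized as intermediate fields of `ℂ/ℚ`.) -/
theorem class_number_divisibility_count (n ℓ : ℕ) (hn : 3 ≤ n) (hℓ : 1 ≤ ℓ) :
    ∃ X₀ c : ℝ, 0 < X₀ ∧ 0 < c ∧
      ∀ X : ℝ, X₀ < X →
        ∃ (m : ℕ) (K : Fin m → IntermediateField ℚ ℂ),
          c * X ^ ((1 : ℝ) / (2 * ((n : ℝ) - 1) * (ℓ : ℝ))) ≤ (m : ℝ) ∧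
          (∀ i j : Fin m, i ≠ j → IsEmpty ((K i) ≃+* (K j))) ∧
          ∀ i : Fin m,
            ∃ h : FiniteDimensional ℚ (K i),
              Module.finrank ℚ (K i) = n ∧
              (haveI := h;
                |(NumberField.discr (K i) : ℝ)| ≤ X ∧
                ℓ ∣ NumberField.classNumber (K i)) := by
  have hden : 4 ≤ 2 * ((n : ℝ) - 1) * ℓ := by
    have : (3 : ℝ) ≤ n := mod_cast hn
    have : (1 : ℝ) ≤ ℓ := mod_cast hℓ
    nlinarith
  obtain ⟨X₁, hX₁⟩ := Filter.eventually_atTop.mp <| class_number_divisibility_count_general hn hℓ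
    (one_div_lt_one_div_of_lt (by linarith) (sub_one_lt (2 * ((n : ℝ) - 1) * ℓ)))
  refine ⟨max X₁ 1, 1, by positivity, one_pos, fun X hX ↦ ?_⟩
  rw [one_mul]
  exact hX₁ X ((le_max_left _ _).trans hX.le)
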